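/- Let f ∈ C²(S¹×ℝ×ℝ, ℝ), let e₋ and e₊ be equilibria of u_t = u_xx + f(x,u,u_x), let m ∈ ℕ be even, and let u be a bounded classical solution on S¹×ℝ. Assume there exist real numbers λ⁻ > 0 > λ⁺ and functions φ⁻, φ⁺ ∈ C¹(S¹), each having exactly m zeros, all of them simple, such that ‖u(·,t) − e₋ − e^{λ⁻ t} φ⁻‖_{C¹(S¹)} = o(e^{λ⁻ t}) as t → −∞ and ‖u(·,t) − e₊ − e^{λ⁺ t} φ⁺‖_{C¹(S¹)} = o(e^{λ⁺ t}) as t → +∞. Then: (1) for every (x,t) ∈ S¹×ℝ, (u(x,t), u_x(x,t)) ≠ (e₋(x), e₋'(x)) and (u(x,t), u_x(x,t)) ≠ (e₊(x), e₊'(x)); and (2) the map (x,t) ∈ S¹×ℝ ↦ (x, u(x,t), u_x(x,t)) is injective. -/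

import Mathlib

open Set

/-- An equilibrium of `u_t = u_xx + f(x,u,u_x)` on the circle. -/
def IsEquilibrium (f : ℝ → ℝ → ℝ → ℝ) (e : ℝ → ℝ) : Prop :=
  Function.Periodic e 1 ∧ ContDiff ℝ 2 e ∧
    ∀ x, deriv (deriv e) x + f x (e x) (deriv e x) = 0

/-- A classical solution `u` (written `u t x` for `u(x,t)`) on `S¹ × ℝ` of
`u_t = u_xx + f(x,u,u_x)`. -/
def IsClassicalSolution (f : ℝ → ℝ → ℝ → ℝ) (u : ℝ → ℝ → ℝ) : Prop :=
  (∀ t, Function.Periodic (u t) 1)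
  ∧ Continuous (fun p : ℝ × ℝ => u p.1 p.2)
  ∧ (∀ t x : ℝ, DifferentiableAt ℝ (fun s => u s x) t)
  ∧ (∀ t, Differentiable ℝ (u t))
  ∧ (∀ t, Differentiable ℝ (deriv (u t)))
  ∧ Continuous (fun p : ℝ × ℝ => deriv (fun s => u s p.2) p.1)
  ∧ Continuous (fun p : ℝ × ℝ => deriv (u p.1) p.2)
  ∧ Continuous (fun p : ℝ × ℝ => deriv (deriv (u p.1)) p.2)
  ∧ ∀ t x : ℝ, deriv (fun s => u s x) t
      = deriv (deriv (u t)) x + f x (u t x) (deriv (u t) x)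

/-- A `1`-periodic function has exactly `m` zeros on the circle (i.e. in a fundamental
domain `[0,1)`), all of them simple. -/
def HasExactlySimpleZeros (φ : ℝ → ℝ) (m : ℕ) : Prop :=
  (∀ x, φ x = 0 → deriv φ x ≠ 0) ∧ ({x ∈ Ico (0:ℝ) 1 | φ x = 0}.ncard = m)

/-!
The difference of two solutions solves a linear parabolic equation `v_t = v_xx + b v_x + c v` on the
circle, and so does the difference of a solution and its own time shift. The number of sign changes
of `v` around the circle never increases in time, because one step of a Lax–Friedrichs scheme with a
fine mesh replaces neighbouring values by positive combinations of them, and its solution converges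
to `v`. The number drops strictly across a degenerate zero, where a small perturbation by a solution
with a tilted profile creates two additional sign changes. The expansions at `t → ±∞` show that
`u - e₋`, `u - e₊` and `u(· + τ) - u` have the same zero number at both ends, so these differences
can have simple zeros only, and a coincidence of `(u, u_x)` with `(e₋, e₋')`, `(e₊, e₊')` or
`(u, u_x)(· + τ)` is exactly a degenerate zero.
-/

open Filter Topology

/-! ### Cyclic alternations and the zero number -/

/-- A bi-infinite sequence with strict sign changes between neighbours. -/
def Alternating (a : ℤ → ℝ) : Prop := ∀ i, a i * a (i + 1) < 0

/-- The lift to `ℝ` of `n` cyclically ordered points of the circle `ℝ/ℤ`. -/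
structure CyclicallyOrdered (x : ℤ → ℝ) (n : ℕ) : Prop where
  strictMono : StrictMono x
  add_period : ∀ i, x (i + n) = x i + 1

/-- `g` changes sign strictly along `n` cyclically ordered points of the circle. -/
def Alternates (g : ℝ → ℝ) (n : ℕ) : Prop :=
  ∃ x, CyclicallyOrdered x n ∧ Alternating (g ∘ x)

/-- The zero number of Sturm, Matano and Angenent: the largest number of cyclically ordered points
along which `g` alternates in sign. -/
noncomputable def zeroNumber (g : ℝ → ℝ) : ℕ∞ := ⨆ n, ⨆ _ : Alternates g n, (n : ℕ∞)

theorem Alternating.of_mul_pos {a b : ℤ → ℝ} (ha : Alternating a) (hab : ∀ i, 0 < b i * a i) :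
    Alternating b := by
  intro i
  have hpos : 0 < (b i * b (i + 1)) * (a i * a (i + 1)) := by
    have := mul_pos (hab i) (hab (i + 1))
    linarith
  exact neg_of_mul_pos_left hpos (ha i).le

theorem Alternating.ne_zero {a : ℤ → ℝ} (ha : Alternating a) (i : ℤ) : a i ≠ 0 :=
  left_ne_zero_of_mul (ha i).ne

theorem Alternating.comp_add_right {a : ℤ → ℝ} (ha : Alternating a) (k : ℤ) :
    Alternating fun i => a (i + k) := by
  intro i
  simpa only [add_right_comm] using ha (i + k)

theorem CyclicallyOrdered.pos {x : ℤ → ℝ} {n : ℕ} (hx : CyclicallyOrdered x n) : 0 < n := by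
  by_contra! h
  have := hx.add_period 0
  simp [Nat.le_zero.1 h] at this

theorem CyclicallyOrdered.comp_add_right {x : ℤ → ℝ} {n : ℕ} (hx : CyclicallyOrdered x n) (k : ℤ) :
    CyclicallyOrdered (fun i => x (i + k)) n where
  strictMono := hx.strictMono.comp add_left_strictMono
  add_period i := by rw [add_right_comm, hx.add_period]

theorem Alternates.le_zeroNumber {g : ℝ → ℝ} {n : ℕ} (h : Alternates g n) :
    (n : ℕ∞) ≤ zeroNumber g :=
  le_iSup₂_of_le n h le_rfl

theorem le_zeroNumber_iff {g : ℝ → ℝ} {m : ℕ} :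
    (m : ℕ∞) ≤ zeroNumber g ↔ ∃ n ≥ m, n = 0 ∨ Alternates g n := by
  constructor
  · intro h
    by_contra! hlt
    have hm : m ≠ 0 := fun h0 => (hlt 0 h0.le).1 rfl
    have hle : zeroNumber g ≤ (m - 1 : ℕ) := iSup₂_le fun n hn => by
      have : n < m := not_le.1 fun hmn => (hlt n hmn).2 hn
      exact_mod_cast Nat.le_sub_one_of_lt this
    have : m ≤ m - 1 := by exact_mod_cast h.trans hle
    omega
  · rintro ⟨n, hmn, rfl | hn⟩
    · simp [Nat.le_zero.1 hmn]
    · exact le_trans (by exact_mod_cast hmn) hn.le_zeroNumber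

theorem zeroNumber_const_mul {c : ℝ} (hc : c ≠ 0) (g : ℝ → ℝ) :
    zeroNumber (fun x => c * g x) = zeroNumber g := by
  have key : ∀ a b, (c * a) * (c * b) < 0 ↔ a * b < 0 := fun a b => by
    rw [mul_mul_mul_comm]
    exact smul_neg_iff_of_pos_left (mul_self_pos.2 hc)
  simp only [zeroNumber, Alternates, Alternating, Function.comp, key]

theorem zeroNumber_neg (g : ℝ → ℝ) : zeroNumber (fun x => -g x) = zeroNumber g := by
  simpa using zeroNumber_const_mul (c := -1) (by norm_num) g

theorem exists_pos_forall_le_of_periodic {a : ℤ → ℝ} {n : ℕ} (hn : 0 < n)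
    (ha : Function.Periodic a n) (hpos : ∀ i, 0 < a i) : ∃ μ > 0, ∀ i, μ ≤ a i := by
  obtain ⟨r, -, hr⟩ := (Finset.range n).exists_min_image (fun r : ℕ => a r)
    (Finset.nonempty_range_iff.2 hn.ne')
  refine ⟨a r, hpos r, fun i => ?_⟩
  have hn' : (0 : ℤ) < n := by exact_mod_cast hn
  have h0 := Int.emod_nonneg i hn'.ne'
  have h1 := Int.emod_lt_of_pos i hn'
  have hmod : a (i % n) = a i := by
    rw [Int.emod_def, mul_comm]
    exact ha.sub_int_mul_eq _
  rw [← hmod, ← Int.toNat_of_nonneg h0]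
  exact hr _ (Finset.mem_range.2 (by omega))

theorem CyclicallyOrdered.periodic_comp {α : Type*} {x : ℤ → ℝ} {n : ℕ}
    (hx : CyclicallyOrdered x n) {g : ℝ → α} (hg : Function.Periodic g 1) :
    Function.Periodic (g ∘ x) (n : ℤ) := fun i => by
  simp only [Function.comp, hx.add_period, hg _]

theorem CyclicallyOrdered.exists_pos_le_abs {g : ℝ → ℝ} {n : ℕ} {x : ℤ → ℝ}
    (hx : CyclicallyOrdered x n) (hg : Function.Periodic g 1) (ha : Alternating (g ∘ x)) :
    ∃ μ > 0, ∀ i, μ ≤ |g (x i)| :=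
  exists_pos_forall_le_of_periodic hx.pos (hx.periodic_comp (hg.comp abs))
    fun i => abs_pos.2 (ha.ne_zero i)

theorem mul_pos_of_abs_sub_lt {a b : ℝ} (h : |b - a| < |a|) : 0 < b * a := by
  rcases lt_or_ge 0 a with ha | ha
  · rw [abs_of_pos ha, abs_lt] at h
    nlinarith
  · rw [abs_of_nonpos ha, abs_lt] at h
    nlinarith

theorem exists_pos_le_zeroNumber {g : ℝ → ℝ} (hg : Function.Periodic g 1) {m : ℕ}
    (hm : (m : ℕ∞) ≤ zeroNumber g) :
    ∃ ε > 0, ∀ G : ℝ → ℝ, (∀ x, |G x - g x| ≤ ε) → (m : ℕ∞) ≤ zeroNumber G := by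
  obtain ⟨n, hmn, rfl | ⟨x, hx, ha⟩⟩ := le_zeroNumber_iff.1 hm
  · exact ⟨1, one_pos, fun G _ => le_zeroNumber_iff.2 ⟨0, hmn, .inl rfl⟩⟩
  · obtain ⟨μ, hμ, hle⟩ := hx.exists_pos_le_abs hg ha
    refine ⟨μ / 2, half_pos hμ, fun G hG => le_zeroNumber_iff.2 ⟨n, hmn, .inr ⟨x, hx, ?_⟩⟩⟩
    exact ha.of_mul_pos fun i => mul_pos_of_abs_sub_lt (by
      simp only [Function.comp]
      linarith [hG (x i), hle i])

theorem exists_int_extension {α : Type*} [AddCommGroup α] {n : ℕ} (hn : 0 < n) {p : ℕ → α} {c : α}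
    (hp : p n = p 0 + c) : ∃ x : ℤ → α, (∀ i, x (i + n) = x i + c) ∧
      ∀ i, ∃ r < n, ∃ q : ℤ, x i = p r + q • c ∧ x (i + 1) = p (r + 1) + q • c := by
  have hn' : (0 : ℤ) < n := by exact_mod_cast hn
  let x : ℤ → α := fun i => p (i % n).toNat + (i / n) • c
  have hx : ∀ (r : ℕ) (q : ℤ), r < n → x (r + n * q) = p r + q • c := fun r q hr => by
    have hr' : (r : ℤ) < n := by exact_mod_cast hr
    simp only [x, Int.add_mul_emod_self_left, Int.add_mul_ediv_left _ _ hn'.ne',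
      Int.emod_eq_of_lt r.cast_nonneg hr', Int.ediv_eq_zero_of_lt r.cast_nonneg hr',
      Int.toNat_natCast, zero_add]
  refine ⟨x, fun i => ?_, fun i => ?_⟩
  · simp only [x, Int.add_emod_right, Int.add_ediv_of_dvd_right (dvd_refl _),
      Int.ediv_self hn'.ne', add_smul, one_smul, add_assoc]
  obtain ⟨r, hr⟩ := Int.eq_ofNat_of_zero_le (Int.emod_nonneg i hn'.ne')
  have hrn : r < n := by exact_mod_cast hr ▸ Int.emod_lt_of_pos i hn'
  have hi : i = r + n * (i / n) := by rw [← hr]; exact (Int.emod_add_mul_ediv i n).symm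
  refine ⟨r, hrn, i / n, ?_, ?_⟩
  · rw [← hx r _ hrn, ← hi]
  · rcases (Nat.succ_le_of_lt hrn).lt_or_eq with h | h
    · rw [← Nat.succ_eq_add_one, ← hx _ _ h]
      congr 1
      push_cast
      linarith
    · have h0 := hx 0 (i / n + 1) hn
      rw [add_smul, one_smul, add_comm _ c, ← add_assoc, ← hp] at h0
      rw [show r + 1 = n from h, ← h0]
      congr 1
      have : (n : ℤ) = r + 1 := by exact_mod_cast h.symm
      push_cast
      linarith

theorem exists_cyclicallyOrdered_alternating {n : ℕ} (hn : 0 < n) {p A : ℕ → ℝ}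
    (hp : ∀ r < n, p r < p (r + 1)) (hpn : p n = p 0 + 1)
    (hA : ∀ r < n, A r * A (r + 1) < 0) (hAn : A n = A 0) :
    ∃ x a, CyclicallyOrdered x n ∧ Alternating a ∧
      ∀ i, ∃ r < n, ∃ q : ℤ, x i = p r + q ∧ a i = A r := by
  obtain ⟨z, hz, hrep⟩ := exists_int_extension hn (p := fun r => (p r, A r))
    (c := ((1 : ℝ), (0 : ℝ))) (by simp [hpn, hAn])
  simp only [Prod.ext_iff, Prod.fst_add, Prod.snd_add, Prod.smul_mk, zsmul_eq_mul, mul_one,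
    smul_zero, add_zero] at hz hrep
  refine ⟨fun i => (z i).1, fun i => (z i).2, ⟨strictMono_int_of_lt_succ fun i => ?_,
    fun i => (hz i).1⟩, fun i => ?_, fun i => ?_⟩ <;> obtain ⟨r, hr, q, h, h'⟩ := hrep i
  · simpa only [h.1, h'.1, add_lt_add_iff_right] using hp r hr
  · simpa only [h.2, h'.2] using hA r hr
  · exact ⟨r, hr, q, h⟩

/-! ### Functions with simple zeros -/

/-- All zeros of `g` are simple. -/
def HasSimpleZeros (g : ℝ → ℝ) : Prop := ∀ x, g x = 0 → deriv g x ≠ 0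

/-- The zeros of a `1`-periodic function on the circle, represented in `[0, 1)`. -/
def circleZeros (g : ℝ → ℝ) : Set ℝ := {x ∈ Ico (0 : ℝ) 1 | g x = 0}

theorem HasSimpleZeros.finite_circleZeros {g : ℝ → ℝ} (hs : HasSimpleZeros g)
    (hd : Differentiable ℝ g) : (circleZeros g).Finite := by
  by_contra hinf
  obtain ⟨x, ⟨-, hgx : g x = 0⟩, hx⟩ := Set.Infinite.exists_accPt_of_subset_isCompact hinf
    (isCompact_Icc.inter_right (isClosed_singleton (x := (0 : ℝ)).preimage hd.continuous))
    fun z hz => ⟨Ico_subset_Icc_self hz.1, hz.2⟩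
  have hfreq : ∃ᶠ z in 𝓝[≠] x, g z = 0 := (accPt_iff_frequently_nhdsNE.1 hx).mono fun z hz => hz.2
  have hne : ∀ᶠ z in 𝓝[≠] x, g z ≠ 0 := by
    simpa [hgx] using (hd x).hasDerivAt.eventually_ne (hs x hgx) (c := g x)
  obtain ⟨z, hz, hz'⟩ := (hfreq.and_eventually hne).exists
  exact hz' hz

theorem exists_zero_near_of_le_deriv {g : ℝ → ℝ} (hd : Differentiable ℝ g) {c s z : ℝ}
    (hs : 0 ≤ s) (hc : ∀ x ∈ Icc (z - s) (z + s), c ≤ deriv g x) (hz : |g z| ≤ c * s) :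
    ∃ w ∈ Icc (z - s) (z + s), g w = 0 := by
  have hslope := (convex_Icc (z - s) (z + s)).mul_sub_le_image_sub_of_le_deriv
    hd.continuous.continuousOn hd.differentiableOn fun x hx => hc x (interior_subset hx)
  have hl := hslope (z - s) ⟨by linarith, by linarith⟩ z ⟨by linarith, by linarith⟩ (by linarith)
  have hr := hslope z ⟨by linarith, by linarith⟩ (z + s) ⟨by linarith, by linarith⟩ (by linarith)
  obtain ⟨hz₁, hz₂⟩ := abs_le.1 hz
  exact intermediate_value_Icc (by linarith) hd.continuous.continuousOn
    ⟨by linarith, by linarith⟩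

theorem exists_zero_near_of_le_abs_deriv {g : ℝ → ℝ} (hd : Differentiable ℝ g)
    {c s z : ℝ} (hc₀ : 0 < c) (hs : 0 ≤ s)
    (hc : ∀ x ∈ Icc (z - s) (z + s), c ≤ |deriv g x|) (hz : |g z| ≤ c * s) :
    ∃ w ∈ Icc (z - s) (z + s), g w = 0 := by
  have hsign : (∀ x ∈ Icc (z - s) (z + s), deriv g x < 0) ∨
      ∀ x ∈ Icc (z - s) (z + s), 0 < deriv g x :=
    hasDerivWithinAt_forall_lt_or_forall_gt_of_forall_ne (convex_Icc _ _)
      (fun x _ => (hd x).hasDerivAt.hasDerivWithinAt)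
      fun x hx h0 => absurd (hc x hx) (by simpa [h0] using hc₀)
  rcases hsign with h | h
  rotate_left
  · exact exists_zero_near_of_le_deriv hd hs (fun x hx => abs_of_pos (h x hx) ▸ hc x hx) hz
  · obtain ⟨w, hw, h0⟩ := exists_zero_near_of_le_deriv hd.neg hs (c := c)
      (fun x hx => by simpa only [deriv.neg', abs_of_neg (h x hx)] using hc x hx)
      (by simpa using hz)
    exact ⟨w, hw, by simpa using h0⟩

theorem exists_mem_Ioo_zero_of_mul_neg {g : ℝ → ℝ} (hc : Continuous g) {a b : ℝ} (hab : a < b)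
    (h : g a * g b < 0) : ∃ z ∈ Ioo a b, g z = 0 := by
  rcases mul_neg_iff.1 h with ⟨ha, hb⟩ | ⟨ha, hb⟩
  · exact intermediate_value_Ioo' hab.le hc.continuousOn ⟨hb, ha⟩
  · exact intermediate_value_Ioo hab.le hc.continuousOn ⟨ha, hb⟩

theorem fract_mem_circleZeros {g : ℝ → ℝ} (hg : Function.Periodic g 1) {w : ℝ} (hw : g w = 0) :
    Int.fract w ∈ circleZeros g :=
  ⟨⟨Int.fract_nonneg w, Int.fract_lt_one w⟩, by
    rw [Int.fract, ← mul_one (⌊w⌋ : ℝ), hg.sub_int_mul_eq, hw]⟩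

theorem Alternates.le_ncard_circleZeros {g G : ℝ → ℝ} (hg : Function.Periodic g 1)
    (hfin : (circleZeros g).Finite) (hG : Function.Periodic G 1) (hGc : Continuous G) {ρ s : ℝ}
    (hsep : ∀ a b, G a = 0 → G b = 0 → |a - b| < ρ → a = b) (hsρ : 2 * s < ρ)
    (hnear : ∀ z, G z = 0 → ∃ w ∈ Icc (z - s) (z + s), g w = 0) {n : ℕ} (hn : Alternates G n) :
    n ≤ (circleZeros g).ncard := by
  obtain ⟨x, hx, ha⟩ := hn
  choose z hz hGz using fun i =>
    exists_mem_Ioo_zero_of_mul_neg hGc (hx.strictMono (lt_add_one i)) (ha i)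
  choose w hw hgw using fun i => hnear (z i) (hGz i)
  have hzmono : StrictMono z := strictMono_int_of_lt_succ fun i => (hz i).2.trans (hz (i + 1)).1
  have hzlt : ∀ i j : Fin n, z i < z j + 1 := fun i j => by
    have hi := hx.strictMono.monotone (show ((i : ℕ) : ℤ) + 1 ≤ 0 + n by omega)
    have hj := hx.strictMono.monotone (show (0 : ℤ) ≤ (j : ℕ) by omega)
    rw [hx.add_period] at hi
    linarith [(hz i).2, (hz j).1]
  have hinj : Function.Injective fun i : Fin n => Int.fract (w i) := fun i j hij => by
    obtain ⟨q, hq⟩ := Int.fract_eq_fract.1 hij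
    have hzq : z i = z j + q := by
      refine hsep _ _ (hGz i) ?_ ?_
      · simpa [hGz] using hG.int_mul q (z j)
      · obtain ⟨hi₁, hi₂⟩ := hw i
        obtain ⟨hj₁, hj₂⟩ := hw j
        rw [abs_lt]
        constructor <;> linarith
    have hq₁ : (q : ℝ) < 1 := by linarith [hzlt i j]
    have hq₂ : (-1 : ℝ) < q := by linarith [hzlt j i]
    have hq₀ : q = 0 := by
      have h₁ : q < 1 := by exact_mod_cast hq₁
      have h₂ : -1 < q := by exact_mod_cast hq₂
      omega
    have : (i : ℤ) = j := hzmono.injective (by simpa [hq₀] using hzq)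
    exact Fin.ext (by exact_mod_cast this)
  have hcard := Set.ncard_le_ncard (range_subset_iff.2 fun i : Fin n =>
    fract_mem_circleZeros hg (hgw i)) hfin
  rwa [← Set.image_univ, Set.ncard_image_of_injective _ hinj, Set.ncard_univ, Nat.card_fin] at hcard

theorem exists_pos_le_of_periodic {G : ℝ → ℝ} (hc : Continuous G) (hper : Function.Periodic G 1)
    (hpos : ∀ x, 0 < G x) : ∃ η > 0, ∀ x, η ≤ G x := by
  obtain ⟨y, -, hy⟩ := isCompact_Icc.exists_isMinOn (nonempty_Icc.2 zero_le_one) hc.continuousOn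
  refine ⟨G y, hpos y, fun x => ?_⟩
  obtain ⟨z, hz, hxz⟩ := hper.exists_mem_Ico₀ one_pos x
  exact hxz ▸ hy (Ico_subset_Icc_self hz)

section PeriodicFamily

variable {X Y : Type*} [UniformSpace X] [UniformSpace Y] {F : X → ℝ → Y} {K : Set X}

theorem exists_continuous_circle_lift (hF : Continuous fun p : X × ℝ => F p.1 p.2)
    (hper : ∀ x, Function.Periodic (F x) 1) :
    ∃ G : X × UnitAddCircle → Y, Continuous G ∧ ∀ x (y : ℝ), G (x, y) = F x y :=
  ⟨fun p => (hper p.1).lift p.2, (IsOpenQuotientMap.id.prodMap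
    QuotientAddGroup.isOpenQuotientMap_mk).isQuotientMap.continuous_iff.2 hF, fun _ _ => rfl⟩

theorem uniformContinuousOn_of_periodic (hF : Continuous fun p : X × ℝ => F p.1 p.2)
    (hper : ∀ x, Function.Periodic (F x) 1) (hK : IsCompact K) :
    UniformContinuousOn (fun p : X × ℝ => F p.1 p.2) (K ×ˢ univ) := by
  obtain ⟨G, hG, hGF⟩ := exists_continuous_circle_lift hF hper
  have hmk : UniformContinuous ((↑) : ℝ → UnitAddCircle) :=
    uniformContinuous_addMonoidHom_of_continuous (f := QuotientAddGroup.mk' _)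
      QuotientAddGroup.continuous_mk
  simp only [← hGF]
  exact ((hK.prod isCompact_univ).uniformContinuousOn_of_continuous hG.continuousOn).comp
    (uniformContinuous_id.prodMap hmk).uniformContinuousOn fun (p : X × ℝ) hp =>
      mk_mem_prod hp.1 (mem_univ _)

theorem isCompact_image_of_periodic (hF : Continuous fun p : X × ℝ => F p.1 p.2)
    (hper : ∀ x, Function.Periodic (F x) 1) (hK : IsCompact K) :
    IsCompact ((fun p : X × ℝ => F p.1 p.2) '' (K ×ˢ univ)) := by
  obtain ⟨G, hG, hGF⟩ := exists_continuous_circle_lift hF hper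
  convert (hK.prod isCompact_univ).image hG using 1
  ext y
  simp [Prod.exists, (QuotientAddGroup.mk_surjective (s := _)).exists, hGF]

end PeriodicFamily

theorem uniformContinuous_of_periodic {G : ℝ → ℝ} (hc : Continuous G)
    (hper : Function.Periodic G 1) : UniformContinuous G := by
  have := uniformContinuousOn_of_periodic (F := fun _ : Unit => G) (hc.comp continuous_snd)
    (fun _ => hper) isCompact_univ
  rw [univ_prod_univ, uniformContinuousOn_univ] at this
  exact this.comp ((uniformContinuous_const (b := ())).prodMk uniformContinuous_id)

theorem periodic_deriv {g : ℝ → ℝ} {c : ℝ} (hg : Function.Periodic g c) :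
    Function.Periodic (deriv g) c := fun x => by
  rw [← deriv_comp_add_const, hg.funext]

section HasSimpleZeros

variable {g : ℝ → ℝ} (hs : HasSimpleZeros g) (hreg : ContDiff ℝ 1 g) (hper : Function.Periodic g 1)
include hs hreg hper

theorem HasSimpleZeros.exists_pos_le_abs_add_abs_deriv :
    ∃ η > 0, ∀ x, η ≤ |g x| + |deriv g x| := by
  refine exists_pos_le_of_periodic (hreg.continuous.abs.add (hreg.continuous_deriv le_rfl).abs)
    ((hper.comp abs).add ((periodic_deriv hper).comp abs)) fun x => ?_
  rcases eq_or_ne (g x) 0 with h | h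
  · exact add_pos_of_nonneg_of_pos (abs_nonneg _) (abs_pos.2 (hs x h))
  · exact add_pos_of_pos_of_nonneg (abs_pos.2 h) (abs_nonneg _)

theorem HasSimpleZeros.exists_pos_zeroNumber_le_ncard : ∃ ε > 0, ∀ G : ℝ → ℝ,
    Differentiable ℝ G → Function.Periodic G 1 → (∀ x, |G x - g x| ≤ ε) →
    (∀ x, |deriv G x - deriv g x| ≤ ε) → zeroNumber G ≤ (circleZeros g).ncard := by
  obtain ⟨η', hη', hnd⟩ := hs.exists_pos_le_abs_add_abs_deriv hreg hper
  obtain ⟨η, rfl⟩ : ∃ η, η' = 4 * η := ⟨η' / 4, by ring⟩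
  have hη : 0 < η := by linarith
  have hd := hreg.differentiable one_ne_zero
  obtain ⟨ρ, hρ, huc⟩ := Metric.uniformContinuous_iff.1
    (uniformContinuous_of_periodic (hreg.continuous_deriv le_rfl) (periodic_deriv hper)) η hη
  simp only [Real.dist_eq] at huc
  refine ⟨min (η / 2) (η * (ρ / 3)), by positivity, fun G hGd hGper hG hG' =>
    iSup₂_le fun n hn => ?_⟩
  have hGη : ∀ x, |G x - g x| ≤ η / 2 := fun x => (hG x).trans (min_le_left _ _)
  have hGη' : ∀ x, |deriv G x - deriv g x| ≤ η / 2 := fun x => (hG' x).trans (min_le_left _ _)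
  have hzero : ∀ z, G z = 0 → ∀ y, |y - z| < ρ → 2 * η ≤ |deriv g y| := fun z hz y hy => by
    have h₁ := hGη z
    rw [hz, zero_sub, abs_neg] at h₁
    have h₂ := abs_sub_abs_le_abs_sub (deriv g z) (deriv g y)
    rw [abs_sub_comm] at h₂
    linarith [hnd z, huc hy]
  have hrolle : ∀ a b, a < b → G a = 0 → G b = 0 → ρ ≤ b - a := fun a b hab ha hb => by
    by_contra! hlt
    obtain ⟨ξ, hξ, hξ0⟩ := exists_deriv_eq_zero hab hGd.continuous.continuousOn (ha.trans hb.symm)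
    have h₁ := hzero a ha ξ (by rw [abs_of_pos (sub_pos.2 hξ.1)]; linarith [hξ.2])
    have h₂ := hGη' ξ
    rw [hξ0, zero_sub, abs_neg] at h₂
    linarith
  have hsep : ∀ a b, G a = 0 → G b = 0 → |a - b| < ρ → a = b := fun a b ha hb hab => by
    by_contra hne
    rcases lt_or_gt_of_ne hne with h | h
    · linarith [hrolle a b h ha hb, neg_abs_le (a - b)]
    · linarith [hrolle b a h hb ha, le_abs_self (a - b)]
  have hnear : ∀ z, G z = 0 → ∃ w ∈ Icc (z - ρ / 3) (z + ρ / 3), g w = 0 := fun z hz => by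
    refine exists_zero_near_of_le_abs_deriv hd hη (by positivity) (fun y hy => ?_) ?_
    · have := hzero z hz y (by rw [abs_lt]; constructor <;> linarith [hy.1, hy.2])
      linarith
    · have := (hG z).trans (min_le_right _ _)
      rwa [hz, zero_sub, abs_neg] at this
  exact_mod_cast hn.le_ncard_circleZeros hper (hs.finite_circleZeros hd) hGper hGd.continuous hsep
    (by linarith) hnear

end HasSimpleZeros

theorem mul_pos_of_forall_ne_zero {g : ℝ → ℝ} (hc : Continuous g) {a b : ℝ} (hab : a ≤ b)
    (h : ∀ x ∈ Icc a b, g x ≠ 0) : 0 < g a * g b := by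
  rcases hab.eq_or_lt with rfl | hlt
  · exact mul_self_pos.2 (h a (left_mem_Icc.2 le_rfl))
  by_contra! hle
  have hne := mul_ne_zero (h a (left_mem_Icc.2 hab)) (h b (right_mem_Icc.2 hab))
  obtain ⟨z, hz, hz0⟩ := exists_mem_Ioo_zero_of_mul_neg hc hlt (hle.lt_of_ne hne)
  exact h z (Ioo_subset_Icc_self hz) hz0

theorem eventually_slope_mul_deriv_pos {g : ℝ → ℝ} {z : ℝ} (hz : deriv g z ≠ 0) :
    ∀ᶠ y in 𝓝[≠] z, 0 < slope g z y * deriv g z :=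
  ((hasDerivAt_iff_tendsto_slope.1 (differentiableAt_of_deriv_ne_zero hz).hasDerivAt).mul_const
    _).eventually_const_lt (mul_self_pos.2 hz)

theorem mul_neg_of_simple_zero {g : ℝ → ℝ} (hc : Continuous g) {a z b : ℝ} (haz : a < z)
    (hzb : z < b) (hz : g z = 0) (hz' : deriv g z ≠ 0) (ha : ∀ x ∈ Ico a z, g x ≠ 0)
    (hb : ∀ x ∈ Ioc z b, g x ≠ 0) : g a * g b < 0 := by
  have hslope := eventually_slope_mul_deriv_pos hz'
  obtain ⟨y, hy, hyl⟩ := ((hslope.filter_mono (nhdsLT_le_nhdsNE z)).and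
    (Ico_mem_nhdsLT haz)).exists
  obtain ⟨w, hw, hwr⟩ := ((hslope.filter_mono (nhdsGT_le_nhdsNE z)).and
    (Ioc_mem_nhdsGT hzb)).exists
  have hyw : g y * g w < 0 := by
    have hprod : slope g z y * slope g z w = g y * g w / ((y - z) * (w - z)) := by
      simp only [slope_def_field, hz, sub_zero, div_mul_div_comm]
    have hpos : 0 < g y * g w / ((y - z) * (w - z)) := by
      rw [← hprod]
      refine pos_of_mul_pos_left ?_ (mul_self_nonneg (deriv g z))
      rw [mul_mul_mul_comm]
      exact mul_pos hy hw
    have hneg : (y - z) * (w - z) < 0 :=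
      mul_neg_of_neg_of_pos (sub_neg.2 hyl.2) (sub_pos.2 hwr.1)
    exact (div_pos_iff.1 hpos).resolve_left (fun h => h.2.not_gt hneg) |>.1
  have hay := mul_pos_of_forall_ne_zero hc hyl.1 fun x hx => ha x ⟨hx.1, hx.2.trans_lt hyl.2⟩
  have hwb := mul_pos_of_forall_ne_zero hc hwr.2 fun x hx => hb x ⟨hwr.1.trans_le hx.1, hx.2⟩
  refine neg_of_mul_pos_left ?_ hyw.le
  linarith [mul_pos hay hwb]

theorem exists_enumeration_circleZeros {g : ℝ → ℝ} (hper : Function.Periodic g 1)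
    (hfin : (circleZeros g).Finite) (hne : (circleZeros g).ncard ≠ 0) :
    ∃ p : ℕ → ℝ, p (circleZeros g).ncard = p 0 + 1 ∧ ∀ r < (circleZeros g).ncard,
      g (p r) = 0 ∧ p r < p (r + 1) ∧ ∀ y ∈ Ioo (p r) (p (r + 1)), g y ≠ 0 := by
  obtain ⟨Z, hZ⟩ := hfin.exists_finset_coe
  have hmem : ∀ z, z ∈ Z ↔ z ∈ Ico (0 : ℝ) 1 ∧ g z = 0 := fun z => by
    rw [← Finset.mem_coe, hZ]; rfl
  rw [← hZ, ncard_coe_finset] at hne ⊢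
  have hm : 0 < Z.card := Nat.pos_of_ne_zero hne
  let e := Z.orderEmbOfFin rfl
  have he : ∀ k, e k ∈ Ico (0 : ℝ) 1 ∧ g (e k) = 0 := fun k =>
    (hmem _).1 (Z.orderEmbOfFin_mem rfl k)
  have hsurj : ∀ z ∈ Ico (0 : ℝ) 1, g z = 0 → ∃ k, e k = z := fun z hz hgz => by
    have : z ∈ range e := by simpa [e, hmem] using ⟨hz, hgz⟩
    exact this
  let p : ℕ → ℝ := fun r => if h : r < Z.card then e ⟨r, h⟩ else e ⟨0, hm⟩ + 1
  have hp : ∀ r (h : r < Z.card), p r = e ⟨r, h⟩ := fun r h => dif_pos h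
  have hpm : p Z.card = p 0 + 1 := by simp [p, hm]
  refine ⟨p, hpm, fun r hr => ⟨hp r hr ▸ (he _).2, ?_⟩⟩
  rcases (Nat.succ_le_of_lt hr).lt_or_eq with h | h
  · rw [hp r hr, hp (r + 1) h]
    refine ⟨e.strictMono (Fin.mk_lt_mk.2 r.lt_succ_self), fun y hy hgy => ?_⟩
    obtain ⟨k, rfl⟩ := hsurj y ⟨(he _).1.1.trans hy.1.le, hy.2.trans (he _).1.2⟩ hgy
    have h₁ : r < k := e.lt_iff_lt.1 hy.1
    have h₂ : k < r + 1 := e.lt_iff_lt.1 hy.2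
    omega
  · rw [show r + 1 = Z.card from h, hpm, hp r hr, hp 0 hm]
    refine ⟨by linarith [(he ⟨r, hr⟩).1.2, (he ⟨0, hm⟩).1.1], fun y hy hgy => ?_⟩
    rcases lt_or_ge y 1 with hy₁ | hy₁
    · obtain ⟨k, rfl⟩ := hsurj y ⟨(he _).1.1.trans hy.1.le, hy₁⟩ hgy
      have h₁ : r < k := e.lt_iff_lt.1 hy.1
      omega
    · obtain ⟨k, hk⟩ := hsurj (y - 1) ⟨by linarith, by linarith [hy.2, (he ⟨0, hm⟩).1.2]⟩
        (by rwa [hper.sub_eq])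
      have : k < ⟨0, hm⟩ := e.lt_iff_lt.1 (by linarith [hy.2])
      exact absurd this (Nat.not_lt_zero _)

theorem exists_cyclicallyOrdered_circleZeros {g : ℝ → ℝ} (hper : Function.Periodic g 1)
    (hfin : (circleZeros g).Finite) (hne : (circleZeros g).ncard ≠ 0) :
    ∃ p, CyclicallyOrdered p (circleZeros g).ncard ∧
      ∀ i, g (p i) = 0 ∧ ∀ y ∈ Ioo (p i) (p (i + 1)), g y ≠ 0 := by
  obtain ⟨p, hpm, hp⟩ := exists_enumeration_circleZeros hper hfin hne
  obtain ⟨x, hx, hrep⟩ := exists_int_extension (Nat.pos_of_ne_zero hne) hpm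
  have hshift : ∀ (y : ℝ) (q : ℤ), g (y + q) = g y := fun y q => by simpa using hper.int_mul q y
  simp only [zsmul_eq_mul, mul_one] at hrep
  refine ⟨x, ⟨strictMono_int_of_lt_succ fun i => ?_, hx⟩, fun i => ?_⟩ <;>
    obtain ⟨r, hr, q, h, h'⟩ := hrep i
  · simpa only [h, h', add_lt_add_iff_right] using (hp r hr).2.1
  · rw [h, h', hshift]
    refine ⟨(hp r hr).1, fun y hy => ?_⟩
    rw [← hper.sub_zsmul_eq q, zsmul_eq_mul, mul_one]
    exact (hp r hr).2.2 _ ⟨by linarith [hy.1], by linarith [hy.2]⟩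

section HasSimpleZeros

variable {g : ℝ → ℝ} (hs : HasSimpleZeros g) (hreg : ContDiff ℝ 1 g) (hper : Function.Periodic g 1)
include hs hreg hper

theorem HasSimpleZeros.ncard_le_zeroNumber : (circleZeros g).ncard ≤ zeroNumber g := by
  have hfin := hs.finite_circleZeros (hreg.differentiable one_ne_zero)
  rcases eq_or_ne (circleZeros g).ncard 0 with h0 | hne
  · simp [h0]
  obtain ⟨p, hp, hz⟩ := exists_cyclicallyOrdered_circleZeros hper hfin hne
  have hlt : ∀ i, p i < p (i + 1) := fun i => hp.strictMono (lt_add_one i)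
  refine Alternates.le_zeroNumber ⟨fun i => (p i + p (i + 1)) / 2,
    ⟨strictMono_int_of_lt_succ fun i => ?_, fun i => ?_⟩, fun i => ?_⟩
  · linarith [hlt i, hlt (i + 1)]
  · rw [add_right_comm, hp.add_period, hp.add_period]
    ring
  · have hi := hlt i
    have hi' := hlt (i + 1)
    refine mul_neg_of_simple_zero hreg.continuous (z := p (i + 1)) (by linarith) (by linarith)
      (hz _).1 (hs _ (hz _).1) (fun y hy => (hz i).2 y ⟨?_, hy.2⟩)
      (fun y hy => (hz (i + 1)).2 y ⟨hy.1, ?_⟩)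
    · linarith [hy.1]
    · linarith [hy.2]

theorem HasSimpleZeros.zeroNumber_eq_ncard : zeroNumber g = (circleZeros g).ncard := by
  obtain ⟨ε, hε, h⟩ := hs.exists_pos_zeroNumber_le_ncard hreg hper
  exact le_antisymm (h g (hreg.differentiable one_ne_zero) hper (by simp [hε.le]) (by simp [hε.le]))
    (hs.ncard_le_zeroNumber hreg hper)

theorem HasSimpleZeros.exists_pos_zeroNumber_eq : ∃ ε > 0, ∀ G : ℝ → ℝ,
    Differentiable ℝ G → Function.Periodic G 1 → (∀ x, |G x - g x| ≤ ε) →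
    (∀ x, |deriv G x - deriv g x| ≤ ε) → zeroNumber G = zeroNumber g := by
  obtain ⟨ε₁, hε₁, hle⟩ := hs.exists_pos_zeroNumber_le_ncard hreg hper
  obtain ⟨ε₂, hε₂, hge⟩ := exists_pos_le_zeroNumber hper (hs.ncard_le_zeroNumber hreg hper)
  rw [hs.zeroNumber_eq_ncard hreg hper]
  exact ⟨min ε₁ ε₂, lt_min hε₁ hε₂, fun G hGd hGper hG hG' => le_antisymm
    (hle G hGd hGper (fun x => (hG x).trans (min_le_left _ _))
      fun x => (hG' x).trans (min_le_left _ _))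
    (hge G fun x => (hG x).trans (min_le_right _ _))⟩

theorem HasSimpleZeros.exists_pos_hasSimpleZeros : ∃ ε > 0, ∀ G : ℝ → ℝ,
    (∀ x, |G x - g x| ≤ ε) → (∀ x, |deriv G x - deriv g x| ≤ ε) → HasSimpleZeros G := by
  obtain ⟨η, hη, hnd⟩ := hs.exists_pos_le_abs_add_abs_deriv hreg hper
  refine ⟨η / 3, by positivity, fun G hG hG' x h0 h0' => ?_⟩
  have h₁ := hG x
  have h₂ := hG' x
  rw [h0, zero_sub, abs_neg] at h₁
  rw [h0', zero_sub, abs_neg] at h₂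
  linarith [hnd x]

end HasSimpleZeros

/-! ### Inserting two sign changes at a zero -/

theorem CyclicallyOrdered.apply_mul {x : ℤ → ℝ} {n : ℕ} (hx : CyclicallyOrdered x n) (k : ℤ) :
    x (k * n) = x 0 + k := by
  have hn : (n : ℝ) ≠ 0 := by exact_mod_cast hx.pos.ne'
  have hper : Function.Periodic (fun i : ℤ => x i - i / n) (n : ℤ) := fun i => by
    simp only [hx.add_period]
    push_cast
    field_simp
    ring
  have := hper.int_mul_eq k
  simp only [Int.cast_mul, Int.cast_natCast, mul_div_cancel_right₀ _ hn, Int.cast_zero, zero_div,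
    sub_zero, Int.cast_id] at this
  linarith

theorem CyclicallyOrdered.exists_mem_Ico {x : ℤ → ℝ} {n : ℕ} (hx : CyclicallyOrdered x n) (t : ℝ) :
    ∃ i, t ∈ Ico (x i) (x (i + 1)) := by
  have hbdd : ∀ z, x z ≤ t → z ≤ ⌈t - x 0⌉ * n := fun z hz => by
    by_contra! hlt
    have := hx.strictMono hlt
    rw [hx.apply_mul] at this
    linarith [Int.le_ceil (t - x 0)]
  have hne : x (⌊t - x 0⌋ * n) ≤ t := by
    rw [hx.apply_mul]
    linarith [Int.floor_le (t - x 0)]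
  obtain ⟨i, hi, hmax⟩ := Int.exists_greatest_of_bdd ⟨_, hbdd⟩ ⟨_, hne⟩
  exact ⟨i, hi, not_le.1 fun h => (lt_add_one i).not_ge (hmax _ h)⟩

/-- An alternating pattern `a` along `n` cyclically ordered points, which has the values of `g` away
from `x₀` and the values `± σ` at the points `x₀ ± ℓ`. -/
def HasPatternWithInsertion (g : ℝ → ℝ) (x₀ σ μ ℓ : ℝ) (n : ℕ) : Prop :=
  ∃ x a, CyclicallyOrdered x n ∧ Alternating a ∧ ∀ i, (μ ≤ |g (x i)| ∧ a i = g (x i)) ∨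
    ∃ (q : ℤ) (ς : ℝ), |ς| = 1 ∧ x i = x₀ + ς * ℓ + q ∧ a i = ς * σ

theorem hasPatternWithInsertion_two (g : ℝ → ℝ) (x₀ μ : ℝ) {ℓ : ℝ} (h₀ : 0 < ℓ) (h₁ : ℓ < 1 / 2) :
    HasPatternWithInsertion g x₀ 1 μ ℓ 2 := by
  obtain ⟨x, a, hx, ha, hrep⟩ := exists_cyclicallyOrdered_alternating two_pos
    (p := fun | 0 => x₀ - ℓ | 1 => x₀ + ℓ | _ => x₀ - ℓ + 1)
    (A := fun | 1 => 1 | _ => -1)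
    (by
      rintro (_ | _ | r) hr
      · change x₀ - ℓ < x₀ + ℓ
        linarith
      · change x₀ + ℓ < x₀ - ℓ + 1
        linarith
      · omega) rfl
    (by rintro (_ | _ | r) hr <;> first | omega | norm_num) rfl
  refine ⟨x, a, hx, ha, fun i => .inr ?_⟩
  obtain ⟨_ | _ | r, hr, q, h, h'⟩ := hrep i
  · exact ⟨q, -1, by norm_num, h.trans (show x₀ - ℓ + q = _ by ring), by rw [h']; norm_num⟩
  · exact ⟨q, 1, by norm_num, h.trans (show x₀ + ℓ + q = _ by ring), by rw [h']; norm_num⟩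
  · omega

theorem hasPatternWithInsertion_of_mem_Ioo {g : ℝ → ℝ} (hg : Function.Periodic g 1) {y : ℤ → ℝ}
    {n : ℕ} (hy : CyclicallyOrdered y n) (ha : Alternating (g ∘ y)) {μ : ℝ}
    (hμ : ∀ i, μ ≤ |g (y i)|) {x₀ ℓ : ℝ} (h₀ : 0 < ℓ) (hl : y 0 < x₀ - ℓ) (hr : x₀ + ℓ < y 1) :
    HasPatternWithInsertion g x₀ (SignType.sign (g (y 0)) : ℝ) μ ℓ (n + 2) := by
  obtain ⟨k, rfl⟩ := Nat.exists_eq_succ_of_ne_zero hy.pos.ne'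
  have hyk : y (k + 1) = y 0 + 1 := by simpa using hy.add_period 0
  set σ : ℝ := (SignType.sign (g (y 0)) : ℝ) with hσ
  have hσ₀ : 0 < g (y 0) * σ := by
    rw [hσ, mul_comm, sign_mul_self]
    exact abs_pos.2 (ha.ne_zero 0)
  have hσ₁ : σ * g (y 1) < 0 := by
    have h := ha 0
    simp only [Function.comp, zero_add] at h
    nlinarith [mul_pos hσ₀ (neg_pos.2 h), sq_nonneg (g (y 0))]
  obtain ⟨x, a, hx, ha, hrep⟩ := exists_cyclicallyOrdered_alternating (n := k + 1 + 2) (by omega)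
    (p := fun | 0 => y 0 | 1 => x₀ - ℓ | 2 => x₀ + ℓ | r + 3 => y (r + 1))
    (A := fun | 0 => g (y 0) | 1 => -σ | 2 => σ | r + 3 => g (y (r + 1)))
    (by
      rintro (_ | _ | _ | r) - <;> dsimp only
      · exact hl
      · linarith
      · simpa using hr
      · exact hy.strictMono (by push_cast; linarith))
    hyk
    (by
      rintro (_ | _ | _ | r) - <;> dsimp only
      · linarith
      · linarith [mul_self_pos.2 (right_ne_zero_of_mul hσ₀.ne')]
      · simpa using hσ₁
      · simpa using ha (r + 1))
    (by simp only [hyk, hg _])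
  refine ⟨x, a, hx, ha, fun i => ?_⟩
  have hper : ∀ (z : ℝ) (q : ℤ), g (z + q) = g z := fun z q => by simpa using hg.int_mul q z
  obtain ⟨_ | _ | _ | r, -, q, h, h'⟩ := hrep i
  · exact .inl ⟨by rw [h, hper]; exact hμ _, by rw [h, hper, h']⟩
  · exact .inr ⟨q, -1, by norm_num, by rw [h]; ring, by rw [h']; ring⟩
  · exact .inr ⟨q, 1, by norm_num, by rw [h]; ring, by rw [h']; ring⟩
  · exact .inl ⟨by rw [h, hper]; exact hμ _, by rw [h, hper, h']⟩

theorem exists_hasPatternWithInsertion {g : ℝ → ℝ} (hg : Function.Periodic g 1) {n : ℕ}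
    (hn : n = 0 ∨ Alternates g n) {x₀ : ℝ} (hx₀ : g x₀ = 0) :
    ∃ σ μ r : ℝ, |σ| = 1 ∧ 0 < μ ∧ 0 < r ∧
      ∀ ℓ, 0 < ℓ → ℓ ≤ r → HasPatternWithInsertion g x₀ σ μ ℓ (n + 2) := by
  rcases hn with rfl | ⟨y, hy, ha⟩
  · exact ⟨1, 1, 1 / 4, by norm_num, one_pos, by norm_num, fun ℓ h₀ h =>
      hasPatternWithInsertion_two g x₀ 1 h₀ (by linarith)⟩
  obtain ⟨μ, hμ, hle⟩ := hy.exists_pos_le_abs hg ha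
  obtain ⟨i, hi, hi'⟩ := hy.exists_mem_Ico x₀
  have hlt : y i < x₀ := hi.lt_of_ne fun h => ha.ne_zero i (by simp only [Function.comp, h, hx₀])
  refine ⟨SignType.sign (g (y i)), μ, min (x₀ - y i) (y (i + 1) - x₀) / 2, ?_, hμ, ?_,
    fun ℓ h₀ hℓ => ?_⟩
  · have := ha.ne_zero i
    simp only [Function.comp] at this
    rcases lt_or_gt_of_ne this with h | h <;> simp [h]
  · exact half_pos (lt_min (by linarith) (by linarith))
  · have h₁ := min_le_left (x₀ - y i) (y (i + 1) - x₀)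
    have h₂ := min_le_right (x₀ - y i) (y (i + 1) - x₀)
    have := hasPatternWithInsertion_of_mem_Ioo hg (hy.comp_add_right i) (ha.comp_add_right i)
      (fun j => hle (j + i)) h₀ (x₀ := x₀) (by simp only [zero_add]; linarith)
      (by rw [add_comm 1 i]; linarith)
    simpa only [zero_add] using this

/-! ### Variation diminishing on a grid -/

/-- An `N`-periodic sequence `a` changes sign strictly along `k` cyclically ordered indices. -/
def CyclicSignChanges (a : ℤ → ℝ) (N k : ℕ) : Prop :=
  ∃ j : ℤ → ℤ, StrictMono j ∧ (∀ i, j (i + k) = j i + N) ∧ Alternating (a ∘ j)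

/-- The restriction of `F` to the grid of mesh `2 * h` through `y`. -/
def gridSample (F : ℝ → ℝ) (h y : ℝ) (l : ℤ) : ℝ := F (y + l * (2 * h))

theorem CyclicSignChanges.of_pos_combination {a b p q : ℤ → ℝ} {N k : ℕ}
    (ha : Function.Periodic a N) (hb : Function.Periodic b N) (hp : ∀ l, 0 < p l)
    (hq : ∀ l, 0 < q l) (hab : ∀ l, b l = p l * a (l + 1) + q l * a l)
    (hk : CyclicSignChanges b N k) : CyclicSignChanges a N k := by
  classical
  obtain ⟨j, hj, hjk, hbj⟩ := hk
  have hchoice : ∀ l, b l ≠ 0 → ¬ 0 < a l * b l → 0 < a (l + 1) * b l := fun l hl hal => by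
    have h₁ : 0 < p l * (a (l + 1) * b l) + q l * (a l * b l) := by
      have h₀ := mul_self_pos.2 hl
      nth_rewrite 1 [hab l] at h₀
      linarith
    have h₂ : q l * (a l * b l) ≤ 0 := mul_nonpos_of_nonneg_of_nonpos (hq l).le (not_lt.1 hal)
    exact pos_of_mul_pos_right (by linarith) (hp l).le
  let j' : ℤ → ℤ := fun i => if 0 < a (j i) * b (j i) then j i else j i + 1
  have hsign : ∀ i, 0 < a (j' i) * b (j i) := fun i => by
    by_cases h : 0 < a (j i) * b (j i)
    · simpa only [j', if_pos h] using h
    · simpa only [j', if_neg h] using hchoice _ (hbj.ne_zero i) h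
  have halt : Alternating (a ∘ j') := hbj.of_mul_pos hsign
  have hbound : ∀ i, j i ≤ j' i ∧ j' i ≤ j i + 1 := fun i => by
    simp only [j']
    split_ifs <;> omega
  refine ⟨j', strictMono_int_of_lt_succ fun i => ?_, fun i => ?_, halt⟩
  · have hle : j' i ≤ j' (i + 1) := (hbound i).2.trans
      ((Int.add_one_le_of_lt (hj (lt_add_one i))).trans (hbound _).1)
    refine hle.lt_of_ne fun heq => (halt i).not_ge ?_
    simpa only [Function.comp, ← heq] using mul_self_nonneg _
  · simp only [j', hjk, ha (j i), hb (j i)]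
    split_ifs <;> ring

theorem gridSample_periodic {F : ℝ → ℝ} (hF : Function.Periodic F 1) {h : ℝ} {N : ℕ}
    (hN : N * (2 * h) = 1) (y : ℝ) : Function.Periodic (gridSample F h y) N := fun l => by
  simp only [gridSample]
  rw [← hF (y + l * (2 * h)), ← hN]
  congr 1
  push_cast
  ring

theorem CyclicSignChanges.of_pattern {x s : ℤ → ℝ} {n N : ℕ} (hx : CyclicallyOrdered x n)
    (hs : Alternating s) {F : ℝ → ℝ} {h y : ℝ} (hh : 0 < h) (hN : N * (2 * h) = 1)
    (hF : ∀ i, ∀ l : ℤ, y + l * (2 * h) ∈ Ioc (x i - 2 * h) (x i) → 0 < gridSample F h y l * s i) :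
    CyclicSignChanges (gridSample F h y) N n := by
  have h2 : 0 < 2 * h := by positivity
  let j : ℤ → ℤ := fun i => ⌊(x i - y) / (2 * h)⌋
  have hj : ∀ i, y + j i * (2 * h) ∈ Ioc (x i - 2 * h) (x i) := fun i => by
    have h₁ := (le_div_iff₀ h2).1 (Int.floor_le ((x i - y) / (2 * h)))
    have h₂ := (div_lt_iff₀ h2).1 (Int.lt_floor_add_one ((x i - y) / (2 * h)))
    exact ⟨by linarith, by linarith⟩
  have halt : Alternating (gridSample F h y ∘ j) := hs.of_mul_pos fun i => hF i _ (hj i)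
  refine ⟨j, strictMono_int_of_lt_succ fun i => ?_, fun i => ?_, halt⟩
  · have hle : j i ≤ j (i + 1) := Int.floor_mono (div_le_div_of_nonneg_right
      (sub_le_sub_right (hx.strictMono (lt_add_one i)).le y) h2.le)
    refine hle.lt_of_ne fun heq => (halt i).not_ge ?_
    simpa only [Function.comp, ← heq] using mul_self_nonneg _
  · have : (x i + 1 - y) / (2 * h) = (x i - y) / (2 * h) + (N : ℤ) := by
      rw [← hN]
      push_cast
      field_simp
      ring
    simp only [j, hx.add_period, this, Int.floor_add_intCast]

theorem CyclicSignChanges.alternates {F : ℝ → ℝ} {h y : ℝ} {N k : ℕ} (hh : 0 < h)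
    (hN : N * (2 * h) = 1) (hk : CyclicSignChanges (gridSample F h y) N k) : Alternates F k := by
  obtain ⟨j, hj, hjk, ha⟩ := hk
  refine ⟨fun i => y + j i * (2 * h), ⟨fun i i' hi => ?_, fun i => ?_⟩, ha⟩
  · have : (j i : ℝ) < j i' := by exact_mod_cast hj hi
    gcongr
  · rw [hjk, ← hN]
    push_cast
    ring

/-! ### Central differences -/

/-- The central average `x ↦ (F (x + h) + F (x - h)) / 2`, as an operator on functions. -/
noncomputable def centralMean (h : ℝ) : (ℝ → ℝ) →ₗ[ℝ] ℝ → ℝ where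
  toFun F x := (F (x + h) + F (x - h)) / 2
  map_add' F G := by ext x; simp only [Pi.add_apply]; ring
  map_smul' r F := by ext x; simp only [Pi.smul_apply, smul_eq_mul, RingHom.id_apply]; ring

/-- The central difference quotient `x ↦ (F (x + h) - F (x - h)) / (2 * h)`, as an operator on
functions. -/
noncomputable def centralDiff (h : ℝ) : (ℝ → ℝ) →ₗ[ℝ] ℝ → ℝ where
  toFun F x := (F (x + h) - F (x - h)) / (2 * h)
  map_add' F G := by ext x; simp only [Pi.add_apply]; ring
  map_smul' r F := by ext x; simp only [Pi.smul_apply, smul_eq_mul, RingHom.id_apply]; ring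

theorem centralMean_apply (h : ℝ) (F : ℝ → ℝ) (x : ℝ) :
    centralMean h F x = (F (x + h) + F (x - h)) / 2 := rfl

theorem centralDiff_apply (h : ℝ) (F : ℝ → ℝ) (x : ℝ) :
    centralDiff h F x = (F (x + h) - F (x - h)) / (2 * h) := rfl

theorem abs_centralMean_le {h M : ℝ} {F : ℝ → ℝ} (hF : ∀ x, |F x| ≤ M) (x : ℝ) :
    |centralMean h F x| ≤ M := by
  obtain ⟨h₁, h₂⟩ := abs_le.1 (hF (x + h))
  obtain ⟨h₃, h₄⟩ := abs_le.1 (hF (x - h))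
  rw [centralMean_apply, abs_le]
  constructor <;> linarith

theorem deriv_centralDiff {F : ℝ → ℝ} (hF : Differentiable ℝ F) (h : ℝ) :
    deriv (centralDiff h F) = centralDiff h (deriv F) := by
  ext x
  have : HasDerivAt (fun y => (F (y + h) - F (y - h)) / (2 * h)) (centralDiff h (deriv F) x) x :=
    (((hF (x + h)).hasDerivAt.comp_add_const x h).sub
      ((hF (x - h)).hasDerivAt.comp_sub_const x h)).div_const (2 * h)
  exact this.deriv

theorem differentiable_centralDiff {F : ℝ → ℝ} (hF : Differentiable ℝ F) (h : ℝ) :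
    Differentiable ℝ (centralDiff h F) :=
  ((hF.comp (differentiable_id.add_const h)).sub
    (hF.comp (differentiable_id.sub_const h))).div_const (2 * h)

theorem exists_centralDiff_eq_deriv {F : ℝ → ℝ} (hF : Differentiable ℝ F) {h : ℝ} (hh : 0 < h)
    (x : ℝ) : ∃ ξ ∈ Ioo (x - h) (x + h), centralDiff h F x = deriv F ξ := by
  obtain ⟨ξ, hξ, heq⟩ := exists_deriv_eq_slope F (show x - h < x + h by linarith)
    hF.continuous.continuousOn hF.differentiableOn
  exact ⟨ξ, hξ, by rw [heq, centralDiff_apply, add_sub_sub_cancel, two_mul]⟩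

theorem exists_centralMean_eq {F : ℝ → ℝ} (hF : Differentiable ℝ F)
    (hF' : Differentiable ℝ (deriv F)) {h : ℝ} (hh : 0 < h) (x : ℝ) :
    ∃ ζ ∈ Ioo (x - h) (x + h), centralMean h F x = F x + h ^ 2 / 2 * deriv (deriv F) ζ := by
  have hderiv : ∀ s, HasDerivAt (fun s => F (x + s) + F (x - s))
      (deriv F (x + s) - deriv F (x - s)) s := fun s =>
    ((hF (x + s)).hasDerivAt.comp_const_add x s).add ((hF (x - s)).hasDerivAt.comp_const_sub x s)
  obtain ⟨s, hs, hratio⟩ := exists_ratio_hasDerivAt_eq_ratio_slope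
    (fun s => F (x + s) + F (x - s)) (fun s => deriv F (x + s) - deriv F (x - s)) hh
    (fun s _ => (hderiv s).continuousAt.continuousWithinAt) (fun s _ => hderiv s)
    (fun s => s ^ 2) (fun s => 2 * s) (by fun_prop) (fun s _ => by simpa using hasDerivAt_pow 2 s)
  obtain ⟨ζ, hζ, hdiff⟩ := exists_centralDiff_eq_deriv hF' hs.1 x
  refine ⟨ζ, ⟨by linarith [hζ.1, hs.2], by linarith [hζ.2, hs.2]⟩, ?_⟩
  have hs0 : s ≠ 0 := hs.1.ne'
  rw [← hdiff, centralMean_apply, centralDiff_apply]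
  field_simp
  simp only [add_zero, sub_zero] at hratio
  linarith

theorem abs_centralDiff_le {h C : ℝ} (hh : 0 < h) {F : ℝ → ℝ}
    (hF : ∀ x y, |F x - F y| ≤ C * |x - y|) (x : ℝ) : |centralDiff h F x| ≤ C := by
  have h2 : 0 < 2 * h := by positivity
  have hdiff := hF (x + h) (x - h)
  rw [add_sub_sub_cancel, ← two_mul, abs_of_pos h2] at hdiff
  rw [centralDiff_apply, abs_div, abs_of_pos h2]
  exact (div_le_iff₀ h2).2 hdiff

/-! ### The explicit Lax–Friedrichs scheme -/

/-- `b` is bounded by `K` and `K`-Lipschitz. -/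
structure BddLip (K : ℝ) (b : ℝ → ℝ) : Prop where
  abs_le : ∀ x, |b x| ≤ K
  abs_sub_le : ∀ x y, |b x - b y| ≤ K * |x - y|

/-- One step of the Lax–Friedrichs scheme for `v_t = v_xx + b v_x + c v`, with space mesh `h` and
time step `h ^ 2 / 2`; the diffusion is carried by the central average. -/
noncomputable def schemeStep (h : ℝ) (b c : ℝ → ℝ) : (ℝ → ℝ) →ₗ[ℝ] ℝ → ℝ where
  toFun F x := centralMean h F x + h ^ 2 / 2 * (b x * centralDiff h F x + c x * centralMean h F x)
  map_add' F G := by ext x; simp only [map_add, Pi.add_apply]; ring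
  map_smul' r F := by
    ext x
    simp only [map_smul, Pi.smul_apply, smul_eq_mul, RingHom.id_apply]
    ring

theorem schemeStep_apply (h : ℝ) (b c F : ℝ → ℝ) (x : ℝ) : schemeStep h b c F x =
    centralMean h F x + h ^ 2 / 2 * (b x * centralDiff h F x + c x * centralMean h F x) := rfl

/-- The mesh `h` is small enough for the scheme with coefficients bounded by `K` to be monotone. -/
structure IsAdmissibleMesh (K h : ℝ) : Prop where
  pos : 0 < h
  le_one : h ≤ 1
  mul_le : h * K ≤ 1 / 2

theorem eventually_isAdmissibleMesh (K : ℝ) : ∀ᶠ h in 𝓝[>] 0, IsAdmissibleMesh K h := by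
  have hlim : Tendsto (fun h : ℝ => h * K) (𝓝[>] 0) (𝓝 0) :=
    ((continuous_mul_const K).tendsto' 0 0 (zero_mul K)).mono_left nhdsWithin_le_nhds
  filter_upwards [self_mem_nhdsWithin, Ioc_mem_nhdsGT one_pos,
    hlim.eventually_le_const (by norm_num : (0 : ℝ) < 1 / 2)] with h h₀ h₁ h₂
  exact ⟨h₀, h₁.2, h₂⟩

/-- The weight of the neighbour `x ± h` in the Lax–Friedrichs scheme, for the drift `± b`. -/
noncomputable def schemeWeight (h b c : ℝ) : ℝ := (1 + h ^ 2 / 2 * c) / 2 + h * b / 4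

theorem schemeStep_eq_weights {h : ℝ} (hh : h ≠ 0) (b c F : ℝ → ℝ) (x : ℝ) : schemeStep h b c F x =
    schemeWeight h (b x) (c x) * F (x + h) + schemeWeight h (-b x) (c x) * F (x - h) := by
  simp only [schemeStep_apply, centralMean_apply, centralDiff_apply, schemeWeight]
  field_simp
  ring

theorem IsAdmissibleMesh.schemeWeight_pos {K h : ℝ} (hh : IsAdmissibleMesh K h) {b c : ℝ}
    (hb : |b| ≤ K) (hc : |c| ≤ K) : 0 < schemeWeight h b c := by
  have hb' : -(1 / 2) ≤ h * b := by nlinarith [abs_le.1 hb, hh.pos, hh.mul_le]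
  have hc' : -(1 / 2) ≤ h * c := by nlinarith [abs_le.1 hc, hh.pos, hh.mul_le]
  have hcc : -(1 / 2) ≤ h ^ 2 * c := by nlinarith [hh.pos, hh.le_one]
  rw [schemeWeight]
  linarith

theorem IsAdmissibleMesh.abs_schemeStep_le {K k h M : ℝ} (hh : IsAdmissibleMesh K h)
    {b c F : ℝ → ℝ} {x : ℝ} (hb : |b x| ≤ K) (hc : |c x| ≤ k) (hk : k ≤ K) (hF : ∀ x, |F x| ≤ M) :
    |schemeStep h b c F x| ≤ (1 + k * (h ^ 2 / 2)) * M := by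
  have hp := (hh.schemeWeight_pos hb (hc.trans hk)).le
  have hq := (hh.schemeWeight_pos ((abs_neg (b x)).trans_le hb) (hc.trans hk)).le
  have hM : 0 ≤ M := (abs_nonneg _).trans (hF x)
  have hsum : schemeWeight h (b x) (c x) + schemeWeight h (-b x) (c x) ≤ 1 + k * (h ^ 2 / 2) := by
    simp only [schemeWeight]
    nlinarith [le_of_abs_le hc, sq_nonneg h]
  rw [schemeStep_eq_weights hh.pos.ne']
  refine (abs_add_le _ _).trans ?_
  rw [abs_mul, abs_mul, abs_of_nonneg hp, abs_of_nonneg hq]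
  calc _ ≤ schemeWeight h (b x) (c x) * M + schemeWeight h (-b x) (c x) * M :=
        add_le_add (mul_le_mul_of_nonneg_left (hF _) hp) (mul_le_mul_of_nonneg_left (hF _) hq)
    _ ≤ (1 + k * (h ^ 2 / 2)) * M := by
        rw [← add_mul]
        exact mul_le_mul_of_nonneg_right hsum hM

theorem centralDiff_schemeStep (h : ℝ) (b c F : ℝ → ℝ) (x : ℝ) :
    centralDiff h (schemeStep h b c F) x =
      schemeStep h (fun y => b (y + h)) 0 (centralDiff h F) x +
        h ^ 2 / 2 * (centralDiff h b x * centralDiff h F (x - h) +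
          c (x + h) * centralMean h (centralDiff h F) x +
          centralDiff h c x * centralMean h F (x - h)) := by
  simp only [schemeStep_apply, centralMean_apply, centralDiff_apply, Pi.zero_apply,
    add_sub_cancel_right, sub_add_cancel]
  ring

/-- `F` and its difference quotients are bounded by `M`: a discrete `C¹` bound. -/
structure HasDiscreteC1Bound (h M : ℝ) (F : ℝ → ℝ) : Prop where
  abs_le : ∀ x, |F x| ≤ M
  abs_centralDiff_le : ∀ x, |centralDiff h F x| ≤ M

/-- The derivatives of `F` of order at most two are bounded by `C`. -/
structure HasC2Bound (C : ℝ) (F : ℝ → ℝ) : Prop where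
  differentiable : Differentiable ℝ F
  differentiable_deriv : Differentiable ℝ (deriv F)
  abs_le : ∀ x, |F x| ≤ C
  abs_deriv_le : ∀ x, |deriv F x| ≤ C
  abs_deriv_deriv_le : ∀ x, |deriv (deriv F) x| ≤ C

theorem HasDiscreteC1Bound.mono {h M M' : ℝ} {F : ℝ → ℝ} (hF : HasDiscreteC1Bound h M F)
    (hM : M ≤ M') : HasDiscreteC1Bound h M' F :=
  ⟨fun x => (hF.abs_le x).trans hM, fun x => (hF.abs_centralDiff_le x).trans hM⟩

theorem HasDiscreteC1Bound.add {h M M' : ℝ} {F F' : ℝ → ℝ} (hF : HasDiscreteC1Bound h M F)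
    (hF' : HasDiscreteC1Bound h M' F') : HasDiscreteC1Bound h (M + M') (F + F') where
  abs_le x := (abs_add_le _ _).trans (add_le_add (hF.abs_le x) (hF'.abs_le x))
  abs_centralDiff_le x := by
    rw [map_add]
    exact (abs_add_le _ _).trans (add_le_add (hF.abs_centralDiff_le x) (hF'.abs_centralDiff_le x))

theorem HasC2Bound.abs_centralDiff_le {h C : ℝ} (hh : 0 < h) {F : ℝ → ℝ} (hF : HasC2Bound C F)
    (x : ℝ) : |centralDiff h F x| ≤ C := by
  obtain ⟨ξ, -, hξ⟩ := exists_centralDiff_eq_deriv hF.differentiable hh x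
  exact hξ ▸ hF.abs_deriv_le ξ

theorem HasC2Bound.hasC2Bound_centralDiff {h C : ℝ} (hh : 0 < h) {F : ℝ → ℝ} (hF : HasC2Bound C F)
    (hF' : HasC2Bound C (deriv F)) : HasC2Bound C (centralDiff h F) := by
  have h₁ := deriv_centralDiff hF.differentiable h
  have h₂ := deriv_centralDiff hF'.differentiable h
  refine ⟨differentiable_centralDiff hF.differentiable h, ?_, hF.abs_centralDiff_le hh, ?_, ?_⟩
  · exact h₁ ▸ differentiable_centralDiff hF'.differentiable h
  · exact h₁ ▸ hF'.abs_centralDiff_le hh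
  · rw [h₁, h₂]
    intro x
    obtain ⟨ξ, -, hξ⟩ := exists_centralDiff_eq_deriv hF'.differentiable_deriv hh x
    exact hξ ▸ hF'.abs_deriv_deriv_le ξ

theorem HasC2Bound.abs_schemeStep_sub_le {h C K : ℝ} (hh : 0 < h) {F : ℝ → ℝ}
    (hF : HasC2Bound C F) {b c : ℝ → ℝ} {x : ℝ} (hb : |b x| ≤ K) (hc : |c x| ≤ K) :
    |(schemeStep h b c F - F) x| ≤ C * (1 + 2 * K) * (h ^ 2 / 2) := by
  obtain ⟨ζ, -, hζ⟩ := exists_centralMean_eq hF.differentiable hF.differentiable_deriv hh x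
  have hK : 0 ≤ K := (abs_nonneg _).trans hb
  have heq : (schemeStep h b c F - F) x = h ^ 2 / 2 *
      (deriv (deriv F) ζ + (b x * centralDiff h F x + c x * centralMean h F x)) := by
    rw [Pi.sub_apply, schemeStep_apply]
    nth_rewrite 1 [hζ]
    ring
  have hbD : |b x * centralDiff h F x| ≤ K * C := by
    rw [abs_mul]
    gcongr
    exact hF.abs_centralDiff_le hh x
  have hcA : |c x * centralMean h F x| ≤ K * C := by
    rw [abs_mul]
    gcongr
    exact abs_centralMean_le hF.abs_le x
  rw [heq, abs_mul, abs_of_nonneg (by positivity : 0 ≤ h ^ 2 / 2), mul_comm]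
  gcongr
  rw [← add_assoc]
  exact (abs_add_three _ _ _).trans (by linarith [hF.abs_deriv_deriv_le ζ])

section DiscreteC1

variable {K h : ℝ} (hh : IsAdmissibleMesh K h) {b c F : ℝ → ℝ} (hb : BddLip K b) (hc : BddLip K c)
include hh hb hc

theorem abs_centralDiff_schemeStep_sub_le {M : ℝ} (hF : HasDiscreteC1Bound h M F) (x : ℝ) :
    |centralDiff h (schemeStep h b c F) x -
      schemeStep h (fun y => b (y + h)) 0 (centralDiff h F) x| ≤ 3 * K * M * (h ^ 2 / 2) := by
  have hK : 0 ≤ K := (abs_nonneg _).trans (hb.abs_le x)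
  have h₁ : |centralDiff h b x * centralDiff h F (x - h)| ≤ K * M := by
    rw [abs_mul]
    gcongr
    exacts [abs_centralDiff_le hh.pos hb.abs_sub_le x, hF.abs_centralDiff_le _]
  have h₂ : |c (x + h) * centralMean h (centralDiff h F) x| ≤ K * M := by
    rw [abs_mul]
    gcongr
    exacts [hc.abs_le _, abs_centralMean_le hF.abs_centralDiff_le x]
  have h₃ : |centralDiff h c x * centralMean h F (x - h)| ≤ K * M := by
    rw [abs_mul]
    gcongr
    exacts [abs_centralDiff_le hh.pos hc.abs_sub_le x, abs_centralMean_le hF.abs_le _]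
  rw [centralDiff_schemeStep, add_sub_cancel_left, abs_mul,
    abs_of_nonneg (by positivity : 0 ≤ h ^ 2 / 2), mul_comm]
  gcongr
  exact (abs_add_three _ _ _).trans (by linarith)

theorem HasDiscreteC1Bound.hasDiscreteC1Bound_schemeStep {M : ℝ} (hF : HasDiscreteC1Bound h M F) :
    HasDiscreteC1Bound h ((1 + 3 * K * (h ^ 2 / 2)) * M) (schemeStep h b c F) := by
  have hK : 0 ≤ K := (abs_nonneg _).trans (hb.abs_le 0)
  have hM : 0 ≤ M := (abs_nonneg _).trans (hF.abs_le 0)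
  refine ⟨fun x => ?_, fun x => ?_⟩
  · refine (hh.abs_schemeStep_le (hb.abs_le x) (hc.abs_le x) le_rfl hF.abs_le).trans ?_
    gcongr
    linarith
  · have h₁ := abs_centralDiff_schemeStep_sub_le hh hb hc hF x
    have h₂ := hh.abs_schemeStep_le (b := fun y => b (y + h)) (c := 0) (x := x) (hb.abs_le _)
      (by simp) hK hF.abs_centralDiff_le
    linarith [abs_sub_abs_le_abs_sub (centralDiff h (schemeStep h b c F) x)
      (schemeStep h (fun y => b (y + h)) 0 (centralDiff h F) x)]

theorem HasC2Bound.hasDiscreteC1Bound_schemeStep_sub {C : ℝ} (hF : HasC2Bound C F)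
    (hF' : HasC2Bound C (deriv F)) :
    HasDiscreteC1Bound h (C * (1 + 5 * K) * (h ^ 2 / 2)) (schemeStep h b c F - F) := by
  have hK : 0 ≤ K := (abs_nonneg _).trans (hb.abs_le 0)
  have hC : 0 ≤ C := (abs_nonneg _).trans (hF.abs_le 0)
  refine ⟨fun x => ?_, fun x => ?_⟩
  · refine (hF.abs_schemeStep_sub_le hh.pos (hb.abs_le x) (hc.abs_le x)).trans ?_
    gcongr
    linarith
  · have h₁ := abs_centralDiff_schemeStep_sub_le hh hb hc
      ⟨hF.abs_le, hF.abs_centralDiff_le hh.pos⟩ x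
    have h₂ := (hF.hasC2Bound_centralDiff hh.pos hF').abs_schemeStep_sub_le hh.pos
      (b := fun y => b (y + h)) (c := 0) (x := x) (hb.abs_le _) (by simpa using hK)
    rw [map_sub, Pi.sub_apply]
    rw [Pi.sub_apply] at h₂
    linarith [abs_sub_le (centralDiff h (schemeStep h b c F) x)
      (schemeStep h (fun y => b (y + h)) 0 (centralDiff h F) x) (centralDiff h F x)]

end DiscreteC1

/-! ### Iterating the scheme -/

/-- `n` steps of the Lax–Friedrichs scheme, step `l` using the coefficients `b l` and `c l`. -/
noncomputable def scheme (h : ℝ) (b c : ℕ → ℝ → ℝ) : ℕ → (ℝ → ℝ) →ₗ[ℝ] ℝ → ℝ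
  | 0 => LinearMap.id
  | n + 1 => schemeStep h (b n) (c n) ∘ₗ scheme h b c n

theorem scheme_zero (h : ℝ) (b c : ℕ → ℝ → ℝ) (F : ℝ → ℝ) : scheme h b c 0 F = F := rfl

theorem scheme_succ (h : ℝ) (b c : ℕ → ℝ → ℝ) (n : ℕ) (F : ℝ → ℝ) :
    scheme h b c (n + 1) F = schemeStep h (b n) (c n) (scheme h b c n F) := rfl

theorem schemeStep_periodic {h : ℝ} {b c F : ℝ → ℝ} (hb : Function.Periodic b 1)
    (hc : Function.Periodic c 1) (hF : Function.Periodic F 1) :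
    Function.Periodic (schemeStep h b c F) 1 := fun x => by
  simp only [schemeStep_apply, centralMean_apply, centralDiff_apply, hb x, hc x,
    add_right_comm x 1 h, add_sub_right_comm x 1 h, hF (x + h), hF (x - h)]

theorem scheme_periodic {h : ℝ} {b c : ℕ → ℝ → ℝ} {F : ℝ → ℝ}
    (hb : ∀ l, Function.Periodic (b l) 1) (hc : ∀ l, Function.Periodic (c l) 1)
    (hF : Function.Periodic F 1) (n : ℕ) : Function.Periodic (scheme h b c n F) 1 := by
  induction n with
  | zero => exact hF
  | succ n ih => exact schemeStep_periodic (hb n) (hc n) ih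

theorem Alternates.of_cyclicSignChanges_scheme {K h : ℝ} (hh : IsAdmissibleMesh K h) {N k : ℕ}
    (hN : N * (2 * h) = 1) {b c : ℕ → ℝ → ℝ} (hbper : ∀ l, Function.Periodic (b l) 1)
    (hcper : ∀ l, Function.Periodic (c l) 1) {F : ℝ → ℝ} (hF : Function.Periodic F 1) {n : ℕ}
    (hb : ∀ l < n, BddLip K (b l)) (hc : ∀ l < n, BddLip K (c l)) {y : ℝ}
    (hk : CyclicSignChanges (gridSample (scheme h b c n F) h y) N k) : Alternates F k := by
  induction n generalizing y with
  | zero => exact hk.alternates hh.pos hN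
  | succ n ih =>
    have hbn := hb n n.lt_succ_self
    have hcn := hc n n.lt_succ_self
    refine ih (fun l hl => hb l (hl.trans n.lt_succ_self))
      (fun l hl => hc l (hl.trans n.lt_succ_self)) (y := y - h) ?_
    refine hk.of_pos_combination (gridSample_periodic (scheme_periodic hbper hcper hF n) hN _)
      (gridSample_periodic (scheme_periodic hbper hcper hF (n + 1)) hN _)
      (p := fun l => schemeWeight h (b n (y + l * (2 * h))) (c n (y + l * (2 * h))))
      (q := fun l => schemeWeight h (-b n (y + l * (2 * h))) (c n (y + l * (2 * h))))
      (fun l => hh.schemeWeight_pos (hbn.abs_le _) (hcn.abs_le _))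
      (fun l => hh.schemeWeight_pos ((abs_neg _).trans_le (hbn.abs_le _)) (hcn.abs_le _))
      fun l => ?_
    have hright : y - h + (l + 1 : ℤ) * (2 * h) = y + l * (2 * h) + h := by push_cast; ring
    have hleft : y - h + l * (2 * h) = y + l * (2 * h) - h := by ring
    simp only [gridSample, scheme_succ, schemeStep_eq_weights hh.pos.ne', hright, hleft]

theorem discrete_gronwall_induction {P : ℕ → ℝ → Prop} {a β : ℝ} (ha : 0 ≤ a) (hβ : 0 ≤ β) {n : ℕ}
    (hmono : ∀ l M M', M ≤ M' → P l M → P l M') (h₀ : P 0 0)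
    (hstep : ∀ l < n, ∀ M, P l M → P (l + 1) ((1 + a) * M + β)) :
    P n (β * n * Real.exp (a * n)) := by
  have hbound : ∀ l ≤ n, P l (β * l * Real.exp (a * l)) := fun l => by
    induction l with
    | zero => exact fun _ => by simpa using h₀
    | succ l ih =>
      intro hl
      refine hmono _ _ _ ?_ (hstep l hl _ (ih (Nat.le_of_succ_le hl)))
      have hexp : (1 + a) * Real.exp (a * l) ≤ Real.exp (a * (l + 1 : ℕ)) := by
        rw [show a * (l + 1 : ℕ) = a + a * l by push_cast; ring, Real.exp_add]
        gcongr
        linarith [Real.add_one_le_exp a]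
      calc (1 + a) * (β * l * Real.exp (a * l)) + β
          = β * l * ((1 + a) * Real.exp (a * l)) + β * 1 := by ring
        _ ≤ β * l * Real.exp (a * (l + 1 : ℕ)) + β * Real.exp (a * (l + 1 : ℕ)) := by
          gcongr
          exact Real.one_le_exp (by positivity)
        _ = β * (l + 1 : ℕ) * Real.exp (a * (l + 1 : ℕ)) := by push_cast; ring
  exact hbound n le_rfl

theorem HasC2Bound.hasDiscreteC1Bound_scheme_sub {K h C : ℝ} (hh : IsAdmissibleMesh K h)
    (hK : 0 ≤ K) {b c : ℕ → ℝ → ℝ} {n : ℕ} (hb : ∀ l < n, BddLip K (b l))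
    (hc : ∀ l < n, BddLip K (c l)) {F : ℝ → ℝ} (hF : HasC2Bound C F)
    (hF' : HasC2Bound C (deriv F)) :
    HasDiscreteC1Bound h
      (C * (1 + 5 * K) * (h ^ 2 / 2) * n * Real.exp (3 * K * (h ^ 2 / 2) * n))
      (scheme h b c n F - F) := by
  have hC : 0 ≤ C := (abs_nonneg _).trans (hF.abs_le 0)
  refine discrete_gronwall_induction (P := fun l M => HasDiscreteC1Bound h M (scheme h b c l F - F))
    (by positivity) (by positivity) (fun l M M' hM hl => hl.mono hM) ?_ fun l hl M hM => ?_
  · rw [scheme_zero, sub_self]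
    exact ⟨by simp, by simp⟩
  · have hsplit : scheme h b c (l + 1) F - F = schemeStep h (b l) (c l) (scheme h b c l F - F) +
        (schemeStep h (b l) (c l) F - F) := by
      rw [map_sub, scheme_succ]
      abel
    rw [hsplit]
    exact (hM.hasDiscreteC1Bound_schemeStep hh (hb l hl) (hc l hl)).add
      (hF.hasDiscreteC1Bound_schemeStep_sub hh (hb l hl) (hc l hl) hF')

/-! ### Tilted profiles -/

/-- `W` vanishes at `x₀` and increases steadily through it at the scale of the mesh `h`. -/
structure IsTilted (h x₀ : ℝ) (W : ℝ → ℝ) : Prop where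
  apply_eq_zero : W x₀ = 0
  abs_le : ∀ x, |W x| ≤ 2
  le_centralDiff : ∀ x, |x - x₀| ≤ 1 / 8 → 1 / 4 ≤ centralDiff h W x

theorem IsTilted.reflect {h x₀ : ℝ} {W : ℝ → ℝ} (hW : IsTilted h x₀ W) :
    IsTilted h x₀ fun x => -W (2 * x₀ - x) where
  apply_eq_zero := by rw [two_mul, add_sub_cancel_right, hW.apply_eq_zero, neg_zero]
  abs_le x := (abs_neg _).trans_le (hW.abs_le _)
  le_centralDiff x hx := by
    have hx' : |2 * x₀ - x - x₀| ≤ 1 / 8 := by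
      rwa [show 2 * x₀ - x - x₀ = -(x - x₀) by ring, abs_neg]
    refine (hW.le_centralDiff _ hx').trans_eq ?_
    simp only [centralDiff_apply, sub_add, sub_sub_eq_add_sub, ← sub_sub]
    ring_nf

theorem IsTilted.le_apply {h x₀ : ℝ} {W : ℝ → ℝ} (hh : 0 < h) (hW : IsTilted h x₀ W) (k : ℕ)
    (hk : k * (2 * h) ≤ 1 / 8) : k * (2 * h) / 4 ≤ W (x₀ + k * (2 * h)) := by
  induction k with
  | zero => simp [hW.apply_eq_zero]
  | succ k ih =>
    push_cast at hk ⊢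
    have hslope := hW.le_centralDiff (x₀ + k * (2 * h) + h) (by
      rw [add_assoc, add_sub_cancel_left, abs_of_pos (by positivity)]
      linarith)
    rw [centralDiff_apply, le_div_iff₀ (by positivity), add_sub_cancel_right,
      show x₀ + k * (2 * h) + h + h = x₀ + (k + 1) * (2 * h) by ring] at hslope
    linarith [ih (by linarith)]

theorem IsTilted.le_mul {h x₀ : ℝ} {W : ℝ → ℝ} (hh : 0 < h) (hW : IsTilted h x₀ W) (k : ℤ)
    (hk : |k * (2 * h)| ≤ 1 / 8) :
    (k * (2 * h)) ^ 2 / 4 ≤ W (x₀ + k * (2 * h)) * (k * (2 * h)) := by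
  obtain ⟨hlower, hupper⟩ := _root_.abs_le.1 hk
  obtain ⟨n, rfl | rfl⟩ := k.eq_nat_or_neg
  · rw [Int.cast_natCast] at hupper ⊢
    nlinarith [hW.le_apply hh n hupper, (by positivity : 0 ≤ n * (2 * h))]
  · rw [Int.cast_neg, Int.cast_natCast, neg_mul] at hlower ⊢
    have hneg := hW.reflect.le_apply hh n (by linarith)
    rw [show 2 * x₀ - (x₀ + n * (2 * h)) = x₀ + -(n * (2 * h)) by ring] at hneg
    nlinarith [(by positivity : 0 ≤ n * (2 * h))]

/-- The `1`-periodic sine profile with slope one at its zero `x₀`. -/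
noncomputable def unitSine (x₀ x : ℝ) : ℝ := Real.sin (2 * Real.pi * (x - x₀)) / (2 * Real.pi)

theorem unitSine_self (x₀ : ℝ) : unitSine x₀ x₀ = 0 := by simp [unitSine]

theorem unitSine_periodic (x₀ : ℝ) : Function.Periodic (unitSine x₀) 1 := fun x => by
  rw [unitSine, unitSine, show 2 * Real.pi * (x + 1 - x₀) = 2 * Real.pi * (x - x₀) + 2 * Real.pi by
    ring, Real.sin_add_two_pi]

theorem abs_unitSine_le (x₀ x : ℝ) : |unitSine x₀ x| ≤ 1 / 6 := by
  rw [unitSine, abs_div, abs_of_pos Real.two_pi_pos]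
  refine div_le_div₀ zero_le_one (Real.abs_sin_le_one _) (by norm_num) ?_
  linarith [Real.pi_gt_three]

theorem hasDerivAt_unitSine (x₀ x : ℝ) :
    HasDerivAt (unitSine x₀) (Real.cos (2 * Real.pi * (x - x₀))) x := by
  have hlin : HasDerivAt (fun x => 2 * Real.pi * (x - x₀)) (2 * Real.pi) x := by
    simpa using ((hasDerivAt_id x).sub_const x₀).const_mul (2 * Real.pi)
  refine (hlin.sin.div_const (2 * Real.pi)).congr_deriv ?_
  field_simp

theorem deriv_unitSine (x₀ : ℝ) :
    deriv (unitSine x₀) = fun x => Real.cos (2 * Real.pi * (x - x₀)) :=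
  funext fun x => (hasDerivAt_unitSine x₀ x).deriv

theorem half_le_deriv_unitSine {x₀ x : ℝ} (hx : |x - x₀| ≤ 1 / 6) :
    1 / 2 ≤ deriv (unitSine x₀) x := by
  simp only [deriv_unitSine]
  rw [← Real.cos_pi_div_three, ← Real.cos_abs (2 * Real.pi * (x - x₀)), abs_mul,
    abs_of_pos Real.two_pi_pos]
  have := Real.pi_pos
  exact Real.cos_le_cos_of_nonneg_of_le_pi (by positivity) (by linarith) (by nlinarith)

theorem hasC2Bound_unitSine (x₀ : ℝ) :
    HasC2Bound 40 (unitSine x₀) ∧ HasC2Bound 40 (deriv (unitSine x₀)) := by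
  have hlin : ∀ x, HasDerivAt (fun x => 2 * Real.pi * (x - x₀)) (2 * Real.pi) x := fun x => by
    simpa using ((hasDerivAt_id x).sub_const x₀).const_mul (2 * Real.pi)
  have h₂ : deriv (deriv (unitSine x₀)) =
      fun x => -Real.sin (2 * Real.pi * (x - x₀)) * (2 * Real.pi) := by
    rw [deriv_unitSine]
    exact funext fun x => (hlin x).cos.deriv
  have h₃ : deriv (deriv (deriv (unitSine x₀))) =
      fun x => -(Real.cos (2 * Real.pi * (x - x₀)) * (2 * Real.pi)) * (2 * Real.pi) := by
    rw [h₂]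
    exact funext fun x => ((hlin x).sin.neg.mul_const _).deriv
  have hpi := Real.pi_pos
  have hpi' := Real.pi_lt_d2
  have hb₀ : ∀ x, |unitSine x₀ x| ≤ 40 := fun x => (abs_unitSine_le x₀ x).trans (by norm_num)
  have hb₁ : ∀ x, |deriv (unitSine x₀) x| ≤ 40 := fun x => by
    rw [deriv_unitSine]
    exact (Real.abs_cos_le_one _).trans (by norm_num)
  have hb₂ : ∀ x, |deriv (deriv (unitSine x₀)) x| ≤ 40 := fun x => by
    rw [h₂, abs_mul, abs_neg, abs_of_pos Real.two_pi_pos]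
    nlinarith [Real.abs_sin_le_one (2 * Real.pi * (x - x₀))]
  have hb₃ : ∀ x, |deriv (deriv (deriv (unitSine x₀))) x| ≤ 40 := fun x => by
    rw [h₃, abs_mul, abs_neg, abs_mul, abs_of_pos Real.two_pi_pos, mul_assoc]
    have hsq : 2 * Real.pi * (2 * Real.pi) ≤ 40 := by nlinarith
    exact (mul_le_mul (Real.abs_cos_le_one _) hsq (by positivity) zero_le_one).trans_eq (one_mul _)
  have hd₀ : Differentiable ℝ (unitSine x₀) := fun x => (hasDerivAt_unitSine x₀ x).differentiableAt
  have hd₁ : Differentiable ℝ (deriv (unitSine x₀)) := by rw [deriv_unitSine]; fun_prop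
  have hd₂ : Differentiable ℝ (deriv (deriv (unitSine x₀))) := by rw [h₂]; fun_prop
  exact ⟨⟨hd₀, hd₁, hb₀, hb₁, hb₂⟩, hd₁, hd₂, hb₁, hb₂, hb₃⟩

theorem hasC2Bound_one : HasC2Bound 40 (1 : ℝ → ℝ) ∧ HasC2Bound 40 (deriv (1 : ℝ → ℝ)) := by
  have h₁ : deriv (1 : ℝ → ℝ) = 0 := deriv_const' 1
  have h₂ : deriv (0 : ℝ → ℝ) = 0 := deriv_const' 0
  rw [h₁]
  refine ⟨⟨differentiable_const 1, ?_, ?_, ?_, ?_⟩, differentiable_const 0, ?_, ?_, ?_, ?_⟩ <;>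
    simp [h₁, h₂]

theorem exists_isTilted_sub_smul {h x₀ : ℝ} {P O : ℝ → ℝ} (hh : 0 < h) (hh' : h ≤ 1 / 24)
    (hP : HasDiscreteC1Bound h (1 / 8) (P - unitSine x₀))
    (hO : HasDiscreteC1Bound h (1 / 8) (O - 1)) :
    ∃ κ : ℝ, |κ| ≤ 1 / 7 ∧ IsTilted h x₀ (P - κ • O) := by
  have hO₀ : 7 / 8 ≤ O x₀ := by
    have := (abs_le.1 (hO.abs_le x₀)).1
    simp only [Pi.sub_apply, Pi.one_apply] at this
    linarith
  have hP₀ : |P x₀| ≤ 1 / 8 := by simpa [unitSine_self] using hP.abs_le x₀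
  have hκ : |P x₀ / O x₀| ≤ 1 / 7 := by
    rw [abs_div, abs_of_pos (by linarith : 0 < O x₀), div_le_iff₀ (by linarith)]
    linarith
  have hmul : ∀ {r : ℝ}, |r| ≤ 1 / 8 → |P x₀ / O x₀ * r| ≤ 1 / 56 := fun hr => by
    rw [abs_mul]
    exact (mul_le_mul hκ hr (abs_nonneg _) (by norm_num)).trans (by norm_num)
  have hsplit : P - (P x₀ / O x₀) • O =
      (P - unitSine x₀) + unitSine x₀ - (P x₀ / O x₀) • (O - 1) - (P x₀ / O x₀) • 1 := by
    rw [smul_sub]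
    abel
  refine ⟨P x₀ / O x₀, hκ, ?_, fun x => ?_, fun x hx => ?_⟩
  · simp only [Pi.sub_apply, Pi.smul_apply, smul_eq_mul]
    rw [div_mul_cancel₀ _ (by linarith : O x₀ ≠ 0), sub_self]
  · rw [hsplit]
    have h₁ := abs_le.1 (hP.abs_le x)
    have h₂ := abs_le.1 (abs_unitSine_le x₀ x)
    have h₃ := abs_le.1 (hmul (hO.abs_le x))
    have h₄ := abs_le.1 hκ
    simp only [Pi.add_apply, Pi.sub_apply, Pi.smul_apply, smul_eq_mul, Pi.one_apply, mul_one,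
      abs_le] at h₁ h₂ h₃ ⊢
    constructor <;> linarith
  · obtain ⟨ξ, hξ, hslope⟩ := exists_centralDiff_eq_deriv
      (fun x => (hasDerivAt_unitSine x₀ x).differentiableAt) hh x
    have hξ' : |ξ - x₀| ≤ 1 / 6 := by
      obtain ⟨h₁, h₂⟩ := abs_le.1 hx
      exact abs_le.2 ⟨by linarith [hξ.1], by linarith [hξ.2]⟩
    have hone : centralDiff h 1 x = 0 := by simp [centralDiff_apply]
    rw [hsplit, map_sub, map_sub, map_add, map_smul, map_smul]
    simp only [Pi.add_apply, Pi.sub_apply, Pi.smul_apply, smul_eq_mul, hone, mul_zero, sub_zero]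
    linarith [(abs_le.1 (hP.abs_centralDiff_le x)).1, half_le_deriv_unitSine hξ',
      (abs_le.1 (hmul (hO.abs_centralDiff_le x))).2]

theorem exists_pos_isTilted {K : ℝ} (hK : 0 ≤ K) : ∃ δ > 0, ∀ h, IsAdmissibleMesh K h →
    h ≤ 1 / 24 → ∀ (n : ℕ) (b c : ℕ → ℝ → ℝ), n * (h ^ 2 / 2) ≤ δ → (∀ l < n, BddLip K (b l)) →
    (∀ l < n, BddLip K (c l)) → ∀ x₀, ∃ κ : ℝ, |κ| ≤ 1 / 7 ∧
    IsTilted h x₀ (scheme h b c n (unitSine x₀ - κ • 1)) := by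
  have hlim : Tendsto (fun δ : ℝ => 40 * (1 + 5 * K) * δ * Real.exp (3 * K * δ)) (𝓝[>] 0) (𝓝 0) :=
    (Continuous.tendsto' (by fun_prop) 0 0 (by simp)).mono_left nhdsWithin_le_nhds
  obtain ⟨δ, hsmall, hδ⟩ := ((hlim.eventually_le_const (by norm_num : (0 : ℝ) < 1 / 8)).and
    self_mem_nhdsWithin).exists
  refine ⟨δ, hδ, fun h hh hh' n b c hn hb hc x₀ => ?_⟩
  have hbound :
      40 * (1 + 5 * K) * (h ^ 2 / 2) * n * Real.exp (3 * K * (h ^ 2 / 2) * n) ≤ 1 / 8 := by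
    refine le_trans ?_ hsmall
    rw [mul_assoc (40 * (1 + 5 * K)), mul_assoc (3 * K), mul_comm (h ^ 2 / 2)]
    have : 0 ≤ n * (h ^ 2 / 2) := by positivity
    gcongr
  have hC1 : ∀ {F}, HasC2Bound 40 F ∧ HasC2Bound 40 (deriv F) →
      HasDiscreteC1Bound h (1 / 8) (scheme h b c n F - F) := fun hF =>
    (hF.1.hasDiscreteC1Bound_scheme_sub hh hK hb hc hF.2).mono hbound
  obtain ⟨κ, hκ, htilt⟩ := exists_isTilted_sub_smul hh.pos hh' (hC1 (hasC2Bound_unitSine x₀))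
    (hC1 hasC2Bound_one)
  exact ⟨κ, hκ, by rwa [map_sub, map_smul]⟩

/-! ### Linear parabolic equations -/

/-- The function `v` (written `v t x`) is `1`-periodic in `x` and has the regularity of a classical
solution of a parabolic equation: `v`, `v_t`, `v_x` and `v_xx` exist and are jointly continuous. -/
structure IsParabolicRegular (v : ℝ → ℝ → ℝ) : Prop where
  periodic : ∀ t, Function.Periodic (v t) 1
  differentiableAt_time : ∀ t x, DifferentiableAt ℝ (fun s => v s x) t
  differentiable : ∀ t, Differentiable ℝ (v t)
  differentiable_deriv : ∀ t, Differentiable ℝ (deriv (v t))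
  continuous_uncurry : Continuous fun p : ℝ × ℝ => v p.1 p.2
  continuous_deriv_time : Continuous fun p : ℝ × ℝ => deriv (fun s => v s p.2) p.1
  continuous_deriv : Continuous fun p : ℝ × ℝ => deriv (v p.1) p.2
  continuous_deriv_deriv : Continuous fun p : ℝ × ℝ => deriv (deriv (v p.1)) p.2

/-- The function `v` is a classical solution on the circle of the linear equation
`v_t = v_xx + b v_x + c v`, whose coefficients are bounded and Lipschitz in `x`, locally uniformly
in time. -/
structure IsLinearSolution (b c v : ℝ → ℝ → ℝ) : Prop extends IsParabolicRegular v where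
  periodic_drift : ∀ t, Function.Periodic (b t) 1
  periodic_potential : ∀ t, Function.Periodic (c t) 1
  bddLip : ∀ s T, ∃ K, ∀ t ∈ Icc s T, BddLip K (b t) ∧ BddLip K (c t)
  deriv_time : ∀ t x, deriv (fun s => v s x) t =
    deriv (deriv (v t)) x + b t x * deriv (v t) x + c t x * v t x

theorem eventually_forall_abs_sub_le {F : ℝ → ℝ → ℝ} (hF : Continuous fun p : ℝ × ℝ => F p.1 p.2)
    (hper : ∀ t, Function.Periodic (F t) 1) (s T : ℝ) {η : ℝ} (hη : 0 < η) :
    ∀ᶠ ρ in 𝓝[>] 0, ∀ t ∈ Icc s T, ∀ t' ∈ Icc s T, ∀ x x',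
      |t - t'| ≤ ρ → |x - x'| ≤ ρ → |F t x - F t' x'| ≤ η := by
  obtain ⟨d, hd, hclose⟩ := Metric.uniformContinuousOn_iff.1
    (uniformContinuousOn_of_periodic hF hper (isCompact_Icc (a := s) (b := T))) η hη
  filter_upwards [Ioo_mem_nhdsGT hd] with ρ hρ t ht t' ht' x x' htt hxx
  exact (hclose (t, x) ⟨ht, mem_univ _⟩ (t', x') ⟨ht', mem_univ _⟩
    (max_lt (htt.trans_lt hρ.2) (hxx.trans_lt hρ.2))).le

theorem abs_schemeStep_sub_le_of_oscillation {K h δ : ℝ} (hh : 0 < h) {b c F : ℝ → ℝ} {x : ℝ}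
    (hb : |b x| ≤ K) (hc : |c x| ≤ K) (hF : Differentiable ℝ F) (hF' : Differentiable ℝ (deriv F))
    (h₀ : ∀ y, |y - x| ≤ h → |F y - F x| ≤ δ) (h₁ : ∀ y, |y - x| ≤ h → |deriv F y - deriv F x| ≤ δ)
    (h₂ : ∀ y, |y - x| ≤ h → |deriv (deriv F) y - deriv (deriv F) x| ≤ δ) :
    |schemeStep h b c F x - (F x + h ^ 2 / 2 * (deriv (deriv F) x + b x * deriv F x + c x * F x))| ≤
      (1 + 2 * K) * δ * (h ^ 2 / 2) := by
  have hnear : ∀ {y}, y ∈ Ioo (x - h) (x + h) → |y - x| ≤ h := fun hy =>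
    abs_sub_le_iff.2 ⟨by linarith [hy.2], by linarith [hy.1]⟩
  obtain ⟨ξ, hξ, hdiff⟩ := exists_centralDiff_eq_deriv hF hh x
  obtain ⟨ζ, hζ, hmean⟩ := exists_centralMean_eq hF hF' hh x
  have hmean' : |centralMean h F x - F x| ≤ δ := by
    have hright := abs_le.1 (h₀ (x + h) (by rw [add_sub_cancel_left, abs_of_pos hh]))
    have hleft := abs_le.1 (h₀ (x - h) (by rw [sub_sub_cancel_left, abs_neg, abs_of_pos hh]))
    rw [centralMean_apply]
    exact abs_le.2 ⟨by linarith, by linarith⟩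
  calc |schemeStep h b c F x -
          (F x + h ^ 2 / 2 * (deriv (deriv F) x + b x * deriv F x + c x * F x))|
      = |(deriv (deriv F) ζ - deriv (deriv F) x) + b x * (deriv F ξ - deriv F x) +
          c x * (centralMean h F x - F x)| * (h ^ 2 / 2) := by
        rw [← abs_of_nonneg (by positivity : 0 ≤ h ^ 2 / 2), ← abs_mul,
          abs_of_nonneg (by positivity : 0 ≤ h ^ 2 / 2), schemeStep_apply, hdiff]
        congr 1
        linear_combination hmean
    _ ≤ (δ + K * δ + K * δ) * (h ^ 2 / 2) := by
        have hK : 0 ≤ K := (abs_nonneg _).trans hb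
        gcongr
        refine (abs_add_three _ _ _).trans ?_
        rw [abs_mul, abs_mul]
        gcongr
        exacts [h₂ ζ (hnear hζ), h₁ ξ (hnear hξ)]
    _ = (1 + 2 * K) * δ * (h ^ 2 / 2) := by ring

theorem IsParabolicRegular.abs_sub_sub_le {v : ℝ → ℝ → ℝ} (hv : IsParabolicRegular v)
    {t τ x δ : ℝ} (hτ : 0 < τ)
    (hδ : ∀ r ∈ Icc t (t + τ), |deriv (fun s => v s x) r - deriv (fun s => v s x) t| ≤ δ) :
    |v (t + τ) x - (v t x + τ * deriv (fun s => v s x) t)| ≤ δ * τ := by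
  obtain ⟨r, hr, hslope⟩ := exists_deriv_eq_slope (fun s => v s x) (lt_add_of_pos_right t hτ)
    (fun r _ => (hv.differentiableAt_time r x).continuousAt.continuousWithinAt)
    fun r _ => (hv.differentiableAt_time r x).differentiableWithinAt
  rw [add_sub_cancel_left, eq_div_iff hτ.ne'] at hslope
  rw [show v (t + τ) x - (v t x + τ * deriv (fun s => v s x) t) =
    (deriv (fun s => v s x) r - deriv (fun s => v s x) t) * τ by linear_combination -hslope,
    abs_mul, abs_of_pos hτ]
  gcongr
  exact hδ r (Ioo_subset_Icc_self hr)

namespace IsParabolicRegular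

variable {v : ℝ → ℝ → ℝ} (hv : IsParabolicRegular v)
include hv

theorem periodic_deriv_time (x t : ℝ) :
    deriv (fun s => v s (x + 1)) t = deriv (fun s => v s x) t := by
  simp only [fun s => hv.periodic s x]

theorem contDiff (t : ℝ) : ContDiff ℝ 1 (v t) :=
  contDiff_one_iff_deriv.2 ⟨hv.differentiable t,
    (hv.differentiable_deriv t).continuous⟩

end IsParabolicRegular

namespace IsLinearSolution

variable {b c v : ℝ → ℝ → ℝ} (hv : IsLinearSolution b c v)
include hv

theorem eventually_abs_sub_schemeStep_le (s T : ℝ) {η : ℝ} (hη : 0 < η) :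
    ∀ᶠ h in 𝓝[>] 0, ∀ t, s ≤ t → t + h ^ 2 / 2 ≤ T → ∀ x,
      |v (t + h ^ 2 / 2) x - schemeStep h (b t) (c t) (v t) x| ≤ η * (h ^ 2 / 2) := by
  obtain ⟨K, hK⟩ := hv.bddLip s T
  obtain ⟨δ, hδ, hδη⟩ := exists_pos_mul_lt hη (2 + 2 * K)
  filter_upwards [self_mem_nhdsWithin, Ioo_mem_nhdsGT one_pos,
    eventually_forall_abs_sub_le hv.continuous_uncurry hv.periodic s T hδ,
    eventually_forall_abs_sub_le hv.continuous_deriv (fun t => periodic_deriv (hv.periodic t))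
      s T hδ,
    eventually_forall_abs_sub_le hv.continuous_deriv_deriv
      (fun t => periodic_deriv (periodic_deriv (hv.periodic t))) s T hδ,
    eventually_forall_abs_sub_le (F := fun t x => deriv (fun s => v s x) t) hv.continuous_deriv_time
      (fun t x => hv.periodic_deriv_time x t) s T hδ] with h hh hh₁ h₀ h₁ h₂ h₃ t hst htT x
  have hτ : 0 < h ^ 2 / 2 := by have := hh₁.1; positivity
  have hτh : h ^ 2 / 2 ≤ h := by nlinarith [hh₁.1, hh₁.2]
  have ht : t ∈ Icc s T := ⟨hst, by linarith⟩
  have htt : |t - t| ≤ h := by simpa using hh₁.1.le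
  have hspace := abs_schemeStep_sub_le_of_oscillation hh ((hK t ht).1.abs_le x)
    ((hK t ht).2.abs_le x) (hv.differentiable t) (hv.differentiable_deriv t)
    (fun y => h₀ t ht t ht y x htt) (fun y => h₁ t ht t ht y x htt) fun y => h₂ t ht t ht y x htt
  have htime := hv.abs_sub_sub_le (x := x) hτ (t := t) fun r hr =>
    h₃ r ⟨hst.trans hr.1, hr.2.trans htT⟩ t ht x x
      (by rw [abs_of_nonneg (sub_nonneg.2 hr.1)]; linarith [hr.2]) (by simpa using hh₁.1.le)
  rw [← hv.deriv_time, abs_sub_comm] at hspace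
  calc |v (t + h ^ 2 / 2) x - schemeStep h (b t) (c t) (v t) x|
      ≤ δ * (h ^ 2 / 2) + (1 + 2 * K) * δ * (h ^ 2 / 2) :=
        (abs_sub_le _ _ _).trans (add_le_add htime hspace)
    _ = (2 + 2 * K) * δ * (h ^ 2 / 2) := by ring
    _ ≤ η * (h ^ 2 / 2) := by gcongr

end IsLinearSolution

/-- The values of a time-dependent coefficient at the time levels of the scheme started at `s`. -/
noncomputable def timeSample (h s : ℝ) (b : ℝ → ℝ → ℝ) (l : ℕ) : ℝ → ℝ := b (s + l * (h ^ 2 / 2))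

/-- The number of time steps of length `h ^ 2 / 2` that fit between the times `s` and `t`. -/
noncomputable def stepCount (h s t : ℝ) : ℕ := ⌊(t - s) / (h ^ 2 / 2)⌋₊

theorem stepCount_mul_le {h s t : ℝ} (hh : 0 < h) (hst : s ≤ t) :
    stepCount h s t * (h ^ 2 / 2) ≤ t - s :=
  (le_div_iff₀ (by positivity)).1
    (Nat.floor_le (div_nonneg (sub_nonneg.2 hst) (by positivity)))

theorem lt_stepCount_mul_add {h : ℝ} (hh : 0 < h) (s t : ℝ) :
    t - s < stepCount h s t * (h ^ 2 / 2) + h ^ 2 / 2 := by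
  rw [← add_one_mul]
  exact (div_lt_iff₀ (by positivity)).1 (Nat.lt_floor_add_one _)

theorem add_mul_mem_Icc_of_le_stepCount {h s t : ℝ} (hh : 0 < h) (hst : s ≤ t) {l : ℕ}
    (hl : l ≤ stepCount h s t) : s + l * (h ^ 2 / 2) ∈ Icc s t := by
  have hle : (l : ℝ) * (h ^ 2 / 2) ≤ stepCount h s t * (h ^ 2 / 2) := by gcongr
  exact ⟨le_add_of_nonneg_right (by positivity), by linarith [stepCount_mul_le hh hst]⟩

/-- The approximation of `v t` computed by the Lax–Friedrichs scheme of mesh `h` from the data `F`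
at time `s`, for the equation with coefficients `b` and `c`. -/
noncomputable def discreteFlow (b c : ℝ → ℝ → ℝ) (h s t : ℝ) : (ℝ → ℝ) →ₗ[ℝ] ℝ → ℝ :=
  scheme h (timeSample h s b) (timeSample h s c) (stepCount h s t)

theorem abs_discreteFlow_sub_le_of_consistent {b c v : ℝ → ℝ → ℝ} {K h s t η : ℝ}
    (hh : IsAdmissibleMesh K h) (hK₀ : 0 ≤ K) (hη : 0 ≤ η)
    (hst : s ≤ t) (hK : ∀ r ∈ Icc s t, BddLip K (b r) ∧ BddLip K (c r))
    (hcons : ∀ r, s ≤ r → r + h ^ 2 / 2 ≤ t → ∀ x,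
      |v (r + h ^ 2 / 2) x - schemeStep h (b r) (c r) (v r) x| ≤ η * (h ^ 2 / 2)) (x : ℝ) :
    |discreteFlow b c h s t (v s) x - v (s + stepCount h s t * (h ^ 2 / 2)) x| ≤
      η * (t - s) * Real.exp (K * (t - s)) := by
  have hle := stepCount_mul_le hh.pos hst
  have hbound := discrete_gronwall_induction (P := fun l M => ∀ x,
    |scheme h (timeSample h s b) (timeSample h s c) l (v s) x - v (s + l * (h ^ 2 / 2)) x| ≤ M)
    (a := K * (h ^ 2 / 2)) (β := η * (h ^ 2 / 2)) (n := stepCount h s t) (by positivity)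
    (by positivity) (fun l M M' hM hl x => (hl x).trans hM) (by simp [scheme_zero])
    (fun l hl M hM x => ?_) x
  · refine hbound.trans ?_
    rw [mul_assoc η, mul_assoc K, mul_comm (h ^ 2 / 2)]
    have : 0 ≤ t - s := sub_nonneg.2 hst
    gcongr
  · have hr := add_mul_mem_Icc_of_le_stepCount hh.pos hst hl.le
    have hr' := add_mul_mem_Icc_of_le_stepCount hh.pos hst (Nat.succ_le_of_lt hl)
    rw [Nat.succ_eq_add_one, Nat.cast_add_one, add_one_mul, ← add_assoc] at hr'
    rw [scheme_succ, Nat.cast_add_one, add_one_mul, ← add_assoc]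
    have hstep := hh.abs_schemeStep_le ((hK _ hr).1.abs_le x) ((hK _ hr).2.abs_le x) le_rfl hM
    have hlin := congr_fun (map_sub (schemeStep h (timeSample h s b l) (timeSample h s c l))
      (scheme h (timeSample h s b) (timeSample h s c) l (v s)) (v (s + l * (h ^ 2 / 2)))) x
    refine (abs_sub_le _ (schemeStep h (timeSample h s b l) (timeSample h s c l)
      (v (s + l * (h ^ 2 / 2))) x) _).trans (add_le_add ?_ ?_)
    · rw [← Pi.sub_apply, ← hlin]
      exact hstep
    · rw [abs_sub_comm]
      exact hcons _ hr.1 hr'.2 x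

namespace IsLinearSolution

variable {b c v : ℝ → ℝ → ℝ} (hv : IsLinearSolution b c v)
include hv

theorem eventually_abs_discreteFlow_sub_le {s t η : ℝ} (hst : s ≤ t) (hη : 0 < η) :
    ∀ᶠ h in 𝓝[>] 0, ∀ x, |discreteFlow b c h s t (v s) x - v t x| ≤ η := by
  obtain ⟨K, hK⟩ := hv.bddLip s t
  have hK₀ : 0 ≤ K := (abs_nonneg _).trans ((hK s (left_mem_Icc.2 hst)).1.abs_le 0)
  obtain ⟨δ, hδ, hδη⟩ := exists_pos_mul_lt (half_pos hη) ((t - s) * Real.exp (K * (t - s)))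
  filter_upwards [eventually_isAdmissibleMesh K, hv.eventually_abs_sub_schemeStep_le s t hδ,
    eventually_forall_abs_sub_le hv.continuous_uncurry hv.periodic s t (half_pos hη)]
    with h hh hcons hosc x
  have hτh : h ^ 2 / 2 ≤ h := by nlinarith [hh.pos, hh.le_one]
  have hflow := abs_discreteFlow_sub_le_of_consistent hh hK₀ hδ.le hst hK hcons x
  have hlast := hosc _ (add_mul_mem_Icc_of_le_stepCount hh.pos hst le_rfl) t
    (right_mem_Icc.2 hst) x x (abs_sub_le_iff.2
      ⟨by linarith [stepCount_mul_le hh.pos hst, hh.pos],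
        by linarith [lt_stepCount_mul_add hh.pos s t]⟩) (by simpa using hh.pos.le)
  refine (abs_sub_le _ _ _).trans ((add_le_add hflow hlast).trans ?_)
  linarith

end IsLinearSolution

theorem frequently_exists_nat_mul_eq_one : ∃ᶠ h : ℝ in 𝓝[>] 0, ∃ N : ℕ, N * (2 * h) = 1 := by
  have hlim : Tendsto (fun n : ℕ => 1 / (2 * ((n : ℝ) + 1))) atTop (𝓝[>] 0) := by
    refine tendsto_nhdsWithin_iff.2 ⟨?_, .of_forall fun n => mem_Ioi.2 (by positivity)⟩
    simpa only [← div_div, div_right_comm _ (2 : ℝ), zero_div] using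
      (tendsto_one_div_add_atTop_nhds_zero_nat (𝕜 := ℝ)).div_const 2
  refine hlim.frequently (.of_forall fun n => ⟨n + 1, ?_⟩)
  push_cast
  field_simp

namespace IsLinearSolution

variable {b c v : ℝ → ℝ → ℝ} (hv : IsLinearSolution b c v)
include hv

theorem discreteFlow_periodic {F : ℝ → ℝ} (hF : Function.Periodic F 1) (h s t : ℝ) :
    Function.Periodic (discreteFlow b c h s t F) 1 :=
  scheme_periodic (fun _ => hv.periodic_drift _) (fun _ => hv.periodic_potential _) hF _

theorem alternates_of_discreteFlow {K h s t : ℝ} (hh : IsAdmissibleMesh K h) {N : ℕ}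
    (hN : N * (2 * h) = 1) (hst : s ≤ t) (hK : ∀ r ∈ Icc s t, BddLip K (b r) ∧ BddLip K (c r))
    {F : ℝ → ℝ} (hF : Function.Periodic F 1) {x a : ℤ → ℝ} {n : ℕ} (hx : CyclicallyOrdered x n)
    (ha : Alternating a) {y : ℝ} (hpos : ∀ i (l : ℤ), y + l * (2 * h) ∈ Ioc (x i - 2 * h) (x i) →
      0 < discreteFlow b c h s t F (y + l * (2 * h)) * a i) : Alternates F n :=
  have hmem : ∀ {l}, l < stepCount h s t → s + l * (h ^ 2 / 2) ∈ Icc s t := fun hl =>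
    add_mul_mem_Icc_of_le_stepCount hh.pos hst hl.le
  .of_cyclicSignChanges_scheme hh hN (fun _ => hv.periodic_drift _)
    (fun _ => hv.periodic_potential _) hF (fun _ hl => (hK _ (hmem hl)).1)
    (fun _ hl => (hK _ (hmem hl)).2) (.of_pattern hx ha hh.pos hN hpos)

theorem alternates_of_le {s t : ℝ} (hst : s ≤ t) {n : ℕ} (hn : Alternates (v t) n) :
    Alternates (v s) n := by
  obtain ⟨x, hx, ha⟩ := hn
  obtain ⟨μ, hμ, hle⟩ := hx.exists_pos_le_abs (hv.periodic t) ha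
  obtain ⟨K, hK⟩ := hv.bddLip s t
  obtain ⟨ρ, hρ, hosc⟩ := Metric.uniformContinuous_iff.1
    (uniformContinuous_of_periodic (hv.differentiable t).continuous (hv.periodic t)) (μ / 2)
    (half_pos hμ)
  obtain ⟨h, ⟨⟨N, hN⟩, hh⟩, hclose, -, hhρ⟩ :=
    ((frequently_exists_nat_mul_eq_one.and_eventually
      (eventually_isAdmissibleMesh K)).and_eventually
      ((hv.eventually_abs_discreteFlow_sub_le hst (by positivity : 0 < μ / 4)).and
        (Ioo_mem_nhdsGT (half_pos hρ)))).exists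
  refine hv.alternates_of_discreteFlow (y := 0) hh hN hst hK (hv.periodic s) hx ha fun i l hl => ?_
  refine mul_pos_of_abs_sub_lt ?_
  have hdist : |v t (0 + l * (2 * h)) - v t (x i)| < μ / 2 :=
    hosc (abs_sub_lt_iff.2 ⟨by linarith [hl.2], by linarith [hl.1]⟩)
  calc |discreteFlow b c h s t (v s) (0 + l * (2 * h)) - v t (x i)|
      ≤ μ / 4 + μ / 2 := (abs_sub_le _ _ _).trans (add_le_add (hclose _) hdist.le)
    _ < μ := by linarith
    _ ≤ |v t (x i)| := hle i

theorem zeroNumber_antitone : Antitone fun t => zeroNumber (v t) := fun s t hst => by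
  refine ENat.forall_natCast_le_iff_le.1 fun m hm => ?_
  obtain ⟨n, hmn, hn⟩ := le_zeroNumber_iff.1 hm
  exact le_zeroNumber_iff.2 ⟨n, hmn, hn.imp_right (hv.alternates_of_le hst)⟩

end IsLinearSolution

theorem exists_pos_abs_le_of_degenerate_zero {g : ℝ → ℝ} {x₀ : ℝ} (hg : DifferentiableAt ℝ g x₀)
    (h₀ : g x₀ = 0) (h₁ : deriv g x₀ = 0) {η : ℝ} (hη : 0 < η) :
    ∃ ρ > 0, ∀ y, |y - x₀| < ρ → |g y| ≤ η * |y - x₀| := by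
  have hlittle := hasDerivAt_iff_isLittleO.1 hg.hasDerivAt
  simp only [h₀, h₁, smul_zero, sub_zero] at hlittle
  exact Metric.eventually_nhds_iff.1 (hlittle.bound hη)

theorem HasSimpleZeros.exists_pos_zeroNumber_add_smul_eq {g : ℝ → ℝ} (hs : HasSimpleZeros g)
    (hreg : ContDiff ℝ 1 g) (hper : Function.Periodic g 1) (x₀ : ℝ) :
    ∃ ε > 0, ∀ r κ : ℝ, |r| ≤ ε → |κ| ≤ 1 / 7 →
      zeroNumber (g + r • (unitSine x₀ - κ • 1)) = zeroNumber g := by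
  obtain ⟨ε, hε, heq⟩ := hs.exists_pos_zeroNumber_eq hreg hper
  have hd : Differentiable ℝ g := hreg.differentiable one_ne_zero
  refine ⟨ε, hε, fun r κ hr hκ => ?_⟩
  have hderiv : ∀ x, HasDerivAt (g + r • (unitSine x₀ - κ • 1))
      (deriv g x + r * Real.cos (2 * Real.pi * (x - x₀))) x := fun x => by
    have hfun : g + r • (unitSine x₀ - κ • 1) = g + fun y => r * (unitSine x₀ y - κ) := by
      ext y
      simp
    rw [hfun]
    exact (hd x).hasDerivAt.add (((hasDerivAt_unitSine x₀ x).sub_const κ).const_mul r)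
  refine heq _ (fun x => (hderiv x).differentiableAt) (fun x => ?_) (fun x => ?_) fun x => ?_
  · simp only [Pi.add_apply, Pi.smul_apply, Pi.sub_apply, Pi.one_apply, hper x,
      unitSine_periodic x₀ x]
  · have hsmall : |unitSine x₀ x - κ| ≤ 1 :=
      (abs_sub _ _).trans (by linarith [abs_unitSine_le x₀ x])
    simpa [abs_mul] using mul_le_mul hr hsmall (abs_nonneg _) hε.le
  · rw [(hderiv x).deriv, add_sub_cancel_left, abs_mul]
    simpa using mul_le_mul hr (Real.abs_cos_le_one _) (abs_nonneg _) hε.le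

theorem IsTilted.le_mul_of_mem_Ioc {h x₀ ℓ ς : ℝ} {W : ℝ → ℝ} (hh : 0 < h) (hW : IsTilted h x₀ W)
    (hς : |ς| = 1) (hℓ : ℓ ≤ 1 / 16) (hhℓ : 4 * h ≤ ℓ) {k : ℤ}
    (hk : k * (2 * h) ∈ Ioc (ς * ℓ - 2 * h) (ς * ℓ)) :
    |k * (2 * h)| ≤ 3 / 2 * ℓ ∧ ℓ / 8 ≤ ς * W (x₀ + k * (2 * h)) := by
  have hkℓ : |k * (2 * h)| ≤ 3 / 2 * ℓ ∧ ℓ / 2 ≤ ς * (k * (2 * h)) := by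
    obtain ⟨h₁, h₂⟩ := hk
    rcases eq_or_eq_neg_of_abs_eq hς with rfl | rfl
    · exact ⟨_root_.abs_le.2 ⟨by linarith, by linarith⟩, by linarith⟩
    · exact ⟨_root_.abs_le.2 ⟨by linarith, by linarith⟩, by linarith⟩
  have hsq : ς * ς = 1 := by rw [← abs_mul_abs_self, hς, one_mul]
  have hmul := hW.le_mul hh k (by linarith [hkℓ.1])
  refine ⟨hkℓ.1, ?_⟩
  set d := k * (2 * h)
  have hpos : 0 < ς * d := by linarith [hkℓ.2]
  have hprod : (ς * d) * (ς * d / 4) ≤ (ς * d) * (ς * W (x₀ + d)) := by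
    linear_combination hmul + (d ^ 2 / 4 - W (x₀ + d) * d) * hsq
  linarith [le_of_mul_le_mul_left hprod hpos, hkℓ.2]

section Perturbation

variable {g Z W : ℝ → ℝ} {x₀ ε ℓ h σ μ : ℝ} (hσ : |σ| = 1) (hε : 0 < ε)
  (hℓ : ℓ ≤ 1 / 16) (hW : IsTilted h x₀ W) (hZ : ∀ x, |Z x - g x| ≤ ε * ℓ / 64)
include hσ hε hℓ hW hZ

theorem perturbation_mul_pos_of_le_abs {x y : ℝ} (hμ : μ ≤ |g y|) (hεμ : ε ≤ μ / 8)
    (hosc : |g x - g y| ≤ μ / 8) : 0 < (Z x + ε * σ * W x) * g y := by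
  refine mul_pos_of_abs_sub_lt ?_
  have hpert : |ε * σ * W x| ≤ ε * 2 := by
    rw [abs_mul, abs_mul, hσ, mul_one, abs_of_pos hε]
    gcongr
    exact hW.abs_le x
  calc |Z x + ε * σ * W x - g y| = |(Z x - g x) + (g x - g y) + ε * σ * W x| := by ring_nf
    _ ≤ ε * ℓ / 64 + μ / 8 + ε * 2 := (abs_add_three _ _ _).trans (by gcongr; exact hZ x)
    _ < μ := by nlinarith
    _ ≤ |g y| := hμ

theorem perturbation_mul_pos_of_mem_Ioc (hh : 0 < h) (hhℓ : 4 * h ≤ ℓ)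
    (hflat : ∀ y, |y - x₀| < 2 * ℓ → |g y| ≤ ε / 64 * |y - x₀|) {ς : ℝ} (hς : |ς| = 1) {k : ℤ}
    (hk : k * (2 * h) ∈ Ioc (ς * ℓ - 2 * h) (ς * ℓ)) :
    0 < (Z (x₀ + k * (2 * h)) + ε * σ * W (x₀ + k * (2 * h))) * (ς * σ) := by
  obtain ⟨hd, hWd⟩ := hW.le_mul_of_mem_Ioc hh hς hℓ hhℓ hk
  set d := k * (2 * h)
  have hgd := hflat (x₀ + d) (by rw [add_sub_cancel_left]; linarith)
  rw [add_sub_cancel_left] at hgd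
  have hsmall : |Z (x₀ + d)| ≤ ε * ℓ / 64 + ε / 64 * (3 / 2 * ℓ) := by
    have hgd' : |g (x₀ + d)| ≤ ε / 64 * (3 / 2 * ℓ) := hgd.trans (by gcongr)
    calc |Z (x₀ + d)| = |(Z (x₀ + d) - g (x₀ + d)) + g (x₀ + d)| := by rw [sub_add_cancel]
      _ ≤ _ := (abs_add_le _ _).trans (add_le_add (hZ _) hgd')
  have hZσ : |Z (x₀ + d) * (ς * σ)| = |Z (x₀ + d)| := by
    rw [abs_mul, abs_mul, hς, hσ, mul_one, mul_one]
  have hσσ : σ * σ = 1 := by rw [← abs_mul_abs_self, hσ, one_mul]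
  have hεW : ε * (ℓ / 8) ≤ ε * (ς * W (x₀ + d)) := by gcongr
  have hεℓ : 0 < ε * ℓ := mul_pos hε (by linarith)
  calc 0 < Z (x₀ + d) * (ς * σ) + ε * (ς * W (x₀ + d)) := by
        linarith [neg_abs_le (Z (x₀ + d) * (ς * σ))]
    _ = (Z (x₀ + d) + ε * σ * W (x₀ + d)) * (ς * σ) := by
        linear_combination (-(ε * ς * W (x₀ + d))) * hσσ

theorem perturbation_mul_pos (hh : 0 < h) (hhℓ : 4 * h ≤ ℓ) {N : ℕ} (hN : N * (2 * h) = 1)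
    (hper : Function.Periodic (Z + (ε * σ) • W) 1) (hεμ : ε ≤ μ / 8)
    (hosc : ∀ x y, |x - y| ≤ 2 * h → |g x - g y| ≤ μ / 8)
    (hflat : ∀ y, |y - x₀| < 2 * ℓ → |g y| ≤ ε / 64 * |y - x₀|) {y a : ℝ}
    (hya : (μ ≤ |g y| ∧ a = g y) ∨
      ∃ (q : ℤ) (ς : ℝ), |ς| = 1 ∧ y = x₀ + ς * ℓ + q ∧ a = ς * σ) {l : ℤ}
    (hl : x₀ + l * (2 * h) ∈ Ioc (y - 2 * h) y) :
    0 < (Z + (ε * σ) • W) (x₀ + l * (2 * h)) * a := by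
  rcases hya with ⟨hμ, rfl⟩ | ⟨q, ς, hς, rfl, rfl⟩
  · exact perturbation_mul_pos_of_le_abs hσ hε hℓ hW hZ hμ hεμ
      (hosc _ _ (abs_sub_le_iff.2 ⟨by linarith [hl.2], by linarith [hl.1]⟩))
  · have hshift : x₀ + l * (2 * h) - q * 1 = x₀ + (l - N * q : ℤ) * (2 * h) := by
      push_cast
      linear_combination (q : ℝ) * hN
    rw [← hper.sub_int_mul_eq q, hshift]
    refine perturbation_mul_pos_of_mem_Ioc hσ hε hℓ hW hZ hh hhℓ hflat hς ?_
    exact ⟨by linarith [hl.1], by linarith [hl.2]⟩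

end Perturbation

namespace IsLinearSolution

variable {b c v : ℝ → ℝ → ℝ} (hv : IsLinearSolution b c v)
include hv

theorem exists_pos_alternates_add_smul {K s t x₀ : ℝ} (hst : s ≤ t)
    (hK : ∀ r ∈ Icc s t, BddLip K (b r) ∧ BddLip K (c r))
    (htilt : ∀ᶠ h in 𝓝[>] 0, ∃ κ : ℝ, |κ| ≤ 1 / 7 ∧
      IsTilted h x₀ (discreteFlow b c h s t (unitSine x₀ - κ • 1)))
    (h₀ : v t x₀ = 0) (h₁ : deriv (v t) x₀ = 0) {n : ℕ} (hn : n = 0 ∨ Alternates (v t) n) :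
    ∃ ε₁ > 0, ∀ ε, 0 < ε → ε ≤ ε₁ → ∃ r κ : ℝ, |r| = ε ∧ |κ| ≤ 1 / 7 ∧
      Alternates (v s + r • (unitSine x₀ - κ • 1)) (n + 2) := by
  obtain ⟨σ, μ, r, hσ, hμ, hr, hins⟩ := exists_hasPatternWithInsertion (hv.periodic t) hn h₀
  refine ⟨μ / 8, by positivity, fun ε hε hεμ => ?_⟩
  obtain ⟨ρ, hρ, hflat⟩ := exists_pos_abs_le_of_degenerate_zero (hv.differentiable t x₀) h₀ h₁
    (by positivity : 0 < ε / 64)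
  obtain ⟨d, hd, hosc⟩ := Metric.uniformContinuous_iff.1
    (uniformContinuous_of_periodic (hv.differentiable t).continuous (hv.periodic t)) (μ / 8)
    (by positivity)
  obtain ⟨ℓ, ⟨hℓ, hℓr⟩, hℓρ, hℓ'⟩ : ∃ ℓ, (0 < ℓ ∧ ℓ ≤ r) ∧ 2 * ℓ ≤ ρ ∧ ℓ ≤ 1 / 16 := by
    refine ⟨min r (min (ρ / 2) (1 / 16)), ⟨by positivity, min_le_left _ _⟩, ?_, ?_⟩
    · linarith [(min_le_right r (min (ρ / 2) (1 / 16))).trans (min_le_left _ _)]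
    · exact (min_le_right _ _).trans (min_le_right _ _)
  obtain ⟨x, a, hx, ha, hxa⟩ := hins ℓ hℓ hℓr
  obtain ⟨h, ⟨⟨N, hN⟩, hh, hclose, κ, hκ, hW⟩, ⟨-, hhℓ⟩, -, hhd⟩ :=
    ((frequently_exists_nat_mul_eq_one.and_eventually ((eventually_isAdmissibleMesh K).and
      ((hv.eventually_abs_discreteFlow_sub_le hst (by positivity : 0 < ε * ℓ / 64)).and
        htilt))).and_eventually (inter_mem (Ioc_mem_nhdsGT (by positivity : 0 < ℓ / 4))
          (Ioo_mem_nhdsGT (half_pos hd)))).exists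
  have hG : Function.Periodic (v s + (ε * σ) • (unitSine x₀ - κ • 1)) 1 := fun x => by
    simp only [Pi.add_apply, Pi.smul_apply, Pi.sub_apply, Pi.one_apply, hv.periodic s x,
      unitSine_periodic x₀ x]
  refine ⟨ε * σ, κ, by rw [abs_mul, hσ, mul_one, abs_of_pos hε], hκ,
    hv.alternates_of_discreteFlow hh hN hst hK hG hx ha (y := x₀) fun i l hl => ?_⟩
  have hflow := hv.discreteFlow_periodic hG h s t
  rw [map_add, map_smul] at hflow ⊢
  exact perturbation_mul_pos hσ hε hℓ' hW hclose hh.pos (by linarith) hN hflow hεμ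
    (fun x y hxy => (hosc (hxy.trans_lt (by linarith))).le)
    (fun y hy => hflat y (hy.trans_le hℓρ)) (hxa i) hl

theorem exists_lt_add_two_le_zeroNumber {t₀ x₀ : ℝ} (h₀ : v t₀ x₀ = 0) (h₁ : deriv (v t₀) x₀ = 0)
    (hs : ∀ s < t₀, HasSimpleZeros (v s)) {n : ℕ} (hn : n = 0 ∨ Alternates (v t₀) n) :
    ∃ s < t₀, ((n + 2 : ℕ) : ℕ∞) ≤ zeroNumber (v s) := by
  obtain ⟨K, hK⟩ := hv.bddLip (t₀ - 1) t₀
  have hK₀ : 0 ≤ K := (abs_nonneg _).trans ((hK t₀ (right_mem_Icc.2 (by linarith))).1.abs_le 0)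
  obtain ⟨δ, hδ, htilt⟩ := exists_pos_isTilted hK₀
  obtain ⟨s, hst, hsδ, hs1⟩ : ∃ s, s < t₀ ∧ t₀ - s ≤ δ ∧ t₀ - 1 ≤ s :=
    ⟨t₀ - min δ 1, sub_lt_self _ (by positivity), by simp, by linarith [min_le_right δ 1]⟩
  have hK' : ∀ r ∈ Icc s t₀, BddLip K (b r) ∧ BddLip K (c r) := fun r hr =>
    hK r ⟨hs1.trans hr.1, hr.2⟩
  have htilt' : ∀ᶠ h in 𝓝[>] 0, ∃ κ : ℝ, |κ| ≤ 1 / 7 ∧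
      IsTilted h x₀ (discreteFlow b c h s t₀ (unitSine x₀ - κ • 1)) := by
    filter_upwards [eventually_isAdmissibleMesh K, Ioc_mem_nhdsGT (by norm_num : (0 : ℝ) < 1 / 24)]
      with h hh hh'
    have hmem : ∀ {l}, l < stepCount h s t₀ → s + l * (h ^ 2 / 2) ∈ Icc s t₀ := fun hl =>
      add_mul_mem_Icc_of_le_stepCount hh.pos hst.le hl.le
    exact htilt h hh hh'.2 _ _ _ ((stepCount_mul_le hh.pos hst.le).trans hsδ)
      (fun _ hl => (hK' _ (hmem hl)).1) (fun _ hl => (hK' _ (hmem hl)).2) x₀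
  obtain ⟨ε₁, hε₁, hpert⟩ := hv.exists_pos_alternates_add_smul hst.le hK' htilt' h₀ h₁ hn
  obtain ⟨ε₂, hε₂, heq⟩ := (hs s hst).exists_pos_zeroNumber_add_smul_eq (hv.contDiff s)
    (hv.periodic s) x₀
  obtain ⟨r, κ, hr, hκ, halt⟩ := hpert (min ε₁ ε₂) (lt_min hε₁ hε₂) (min_le_left _ _)
  exact ⟨s, hst, heq r κ (hr.trans_le (min_le_right _ _)) hκ ▸ halt.le_zeroNumber⟩

theorem isOpen_setOf_hasSimpleZeros : IsOpen {t | HasSimpleZeros (v t)} := by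
  refine isOpen_iff_mem_nhds.2 fun t ht => ?_
  obtain ⟨ε, hε, hstable⟩ := HasSimpleZeros.exists_pos_hasSimpleZeros ht (hv.contDiff t)
    (hv.periodic t)
  obtain ⟨ρ, hosc, hosc', hρ⟩ := ((eventually_forall_abs_sub_le hv.continuous_uncurry hv.periodic
    (t - 1) (t + 1) hε).and ((eventually_forall_abs_sub_le hv.continuous_deriv
      (fun t => periodic_deriv (hv.periodic t)) (t - 1) (t + 1) hε).and
        self_mem_nhdsWithin)).exists
  filter_upwards [Metric.closedBall_mem_nhds t hρ, Icc_mem_nhds (sub_one_lt t) (lt_add_one t)]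
    with r hr hr'
  have ht' : t ∈ Icc (t - 1) (t + 1) := ⟨by linarith, by linarith⟩
  have hxx : ∀ x : ℝ, |x - x| ≤ ρ := fun x => by simpa using le_of_lt hρ
  exact hstable _ (fun x => hosc r hr' t ht' x x hr (hxx x))
    fun x => hosc' r hr' t ht' x x hr (hxx x)

theorem hasSimpleZeros_of_eventually {m : ℕ}
    (hbot : ∀ᶠ t in atBot, HasSimpleZeros (v t) ∧ zeroNumber (v t) ≤ m)
    (htop : ∀ᶠ t in atTop, m ≤ zeroNumber (v t)) (t : ℝ) : HasSimpleZeros (v t) := by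
  by_contra ht
  obtain ⟨T, hT⟩ := eventually_atBot.1 hbot
  have hbdd : BddBelow {t | HasSimpleZeros (v t)}ᶜ :=
    ⟨T, fun r hr => le_of_not_ge fun hrT => hr (hT r hrT).1⟩
  obtain ⟨t₀, ht₀, hfirst⟩ : ∃ t₀, ¬ HasSimpleZeros (v t₀) ∧ ∀ s < t₀, HasSimpleZeros (v s) :=
    ⟨_, hv.isOpen_setOf_hasSimpleZeros.isClosed_compl.csInf_mem ⟨t, ht⟩ hbdd,
      fun s hs => not_not.1 (notMem_of_lt_csInf hs hbdd)⟩
  simp only [HasSimpleZeros, not_forall, not_not] at ht₀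
  obtain ⟨x₀, h₀, h₁⟩ := ht₀
  obtain ⟨T', hT'⟩ := (htop.and (eventually_ge_atTop t₀)).exists
  obtain ⟨n, hmn, hn⟩ := le_zeroNumber_iff.1 (hT'.1.trans (hv.zeroNumber_antitone hT'.2))
  obtain ⟨s, -, hs⟩ := hv.exists_lt_add_two_le_zeroNumber h₀ h₁ hfirst hn
  have hle : ((n + 2 : ℕ) : ℕ∞) ≤ m :=
    (hs.trans (hv.zeroNumber_antitone (min_le_left s T))).trans (hT _ (min_le_right s T)).2
  have := Nat.cast_le.1 hle
  omega

end IsLinearSolution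

/-! ### Differences of solutions -/

section SegmentAverage

variable {E V : Type*} [NormedAddCommGroup E] [NormedSpace ℝ E] [NormedAddCommGroup V]
  [NormedSpace ℝ V]

/-- The mean of `D` over the segment from `q` to `p`; applied to a derivative, it is the linear map
of Hadamard's formula `F p - F q = segmentAverage F' p q (p - q)`. -/
noncomputable def segmentAverage (D : E → V) (p q : E) : V :=
  ∫ θ in (0 : ℝ)..1, D (AffineMap.lineMap q p θ)

theorem norm_segmentAverage_le {D : E → V} {S : Set E} {C : ℝ} (hS : Convex ℝ S)
    (hC : ∀ z ∈ S, ‖D z‖ ≤ C) {p q : E} (hp : p ∈ S) (hq : q ∈ S) :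
    ‖segmentAverage D p q‖ ≤ C := by
  have hbound : ∀ θ ∈ uIoc (0 : ℝ) 1, ‖D (AffineMap.lineMap q p θ)‖ ≤ C := fun θ hθ => by
    rw [uIoc_of_le zero_le_one] at hθ
    exact hC _ (hS.lineMap_mem hq hp ⟨hθ.1.le, hθ.2⟩)
  simpa [segmentAverage] using intervalIntegral.norm_integral_le_of_norm_le_const hbound

theorem dist_segmentAverage_le {D : E → V} {S : Set E} {L : NNReal} {d : ℝ} (hD : Continuous D)
    (hS : Convex ℝ S) (hL : LipschitzOnWith L D S) {p q p' q' : E} (hp : p ∈ S) (hq : q ∈ S)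
    (hp' : p' ∈ S) (hq' : q' ∈ S) (hpp : dist p p' ≤ d) (hqq : dist q q' ≤ d) :
    dist (segmentAverage D p q) (segmentAverage D p' q') ≤ L * d := by
  have hbound : ∀ θ ∈ uIoc (0 : ℝ) 1,
      ‖D (AffineMap.lineMap q p θ) - D (AffineMap.lineMap q' p' θ)‖ ≤ L * d := fun θ hθ => by
    rw [uIoc_of_le zero_le_one] at hθ
    have hθ' : θ ∈ Icc (0 : ℝ) 1 := ⟨hθ.1.le, hθ.2⟩
    rw [← dist_eq_norm]
    refine (hL.dist_le_mul _ (hS.lineMap_mem hq hp hθ') _ (hS.lineMap_mem hq' hp' hθ')).trans ?_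
    gcongr
    rw [dist_eq_norm, ← vsub_eq_sub, AffineMap.lineMap_vsub_lineMap, ← mem_closedBall_zero_iff]
    exact (convex_closedBall 0 d).lineMap_mem
      (by rwa [mem_closedBall_zero_iff, vsub_eq_sub, ← dist_eq_norm])
      (by rwa [mem_closedBall_zero_iff, vsub_eq_sub, ← dist_eq_norm]) hθ'
  have hint : ∀ a b : E, IntervalIntegrable (fun θ : ℝ => D (AffineMap.lineMap a b θ))
      MeasureTheory.volume 0 1 := fun a b =>
    (hD.comp AffineMap.lineMap_continuous).intervalIntegrable _ _
  rw [dist_eq_norm, segmentAverage, segmentAverage, ← intervalIntegral.integral_sub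
    (hint q p) (hint q' p')]
  simpa using intervalIntegral.norm_integral_le_of_norm_le_const hbound

theorem sub_eq_segmentAverage_fderiv [CompleteSpace V] {F : E → V} (hF : ContDiff ℝ 1 F)
    (p q : E) : F p - F q = segmentAverage (fderiv ℝ F) p q (p - q) := by
  have hcont : Continuous fun θ : ℝ => fderiv ℝ F (AffineMap.lineMap q p θ) :=
    (hF.continuous_fderiv one_ne_zero).comp AffineMap.lineMap_continuous
  have hderiv : ∀ θ ∈ uIcc (0 : ℝ) 1, HasDerivAt (fun θ => F (AffineMap.lineMap q p θ))
      (fderiv ℝ F (AffineMap.lineMap q p θ) (p - q)) θ := fun θ _ =>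
    (hF.differentiable one_ne_zero _).hasFDerivAt.comp_hasDerivAt θ AffineMap.hasDerivAt_lineMap
  rw [segmentAverage, ContinuousLinearMap.intervalIntegral_apply (hcont.intervalIntegrable _ _),
    intervalIntegral.integral_eq_sub_of_hasDerivAt hderiv
      ((hcont.clm_apply continuous_const).intervalIntegrable _ _),
    AffineMap.lineMap_apply_one, AffineMap.lineMap_apply_zero]

theorem periodic_fderiv {F : E → V} {c : E} (hF : Function.Periodic F c) :
    Function.Periodic (fderiv ℝ F) c := fun x => by
  rw [← fderiv_comp_add_right, hF.funext]

end SegmentAverage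

section PeriodicFirstVariable

variable {Y V : Type*} [NormedAddCommGroup Y] [NormedAddCommGroup V] {G : ℝ × Y → V} {K : Set Y}

theorem exists_forall_norm_le_of_periodic (hG : Continuous G) (hper : Function.Periodic G (1, 0))
    (hK : IsCompact K) : ∃ C, ∀ p ∈ (univ : Set ℝ) ×ˢ K, ‖G p‖ ≤ C := by
  have hcompact := isCompact_image_of_periodic (F := fun y x => G (x, y))
    (hG.comp continuous_swap) (fun y x => by simpa using hper (x, y)) hK
  obtain ⟨C, hC⟩ := hcompact.isBounded.exists_norm_le
  exact ⟨C, fun p hp => hC _ (mem_image_of_mem _ (mk_mem_prod hp.2 (mem_univ p.1)))⟩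

theorem exists_lipschitzOnWith_of_periodic [NormedSpace ℝ Y] [NormedSpace ℝ V]
    (hG : ContDiff ℝ 1 G) (hper : Function.Periodic G (1, 0)) (hK : IsCompact K)
    (hconv : Convex ℝ K) : ∃ L, LipschitzOnWith L G (univ ×ˢ K) := by
  obtain ⟨C, hC⟩ := exists_forall_norm_le_of_periodic (hG.continuous_fderiv one_ne_zero)
    (periodic_fderiv hper) hK
  exact ⟨C.toNNReal, (convex_univ.prod hconv).lipschitzOnWith_of_nnnorm_fderiv_le
    (fun p _ => hG.differentiable one_ne_zero p) fun p hp =>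
      NNReal.le_toNNReal_of_coe_le (hC p hp)⟩

end PeriodicFirstVariable

theorem BddLip.mono {K K' : ℝ} {g : ℝ → ℝ} (hg : BddLip K g) (hK : K ≤ K') : BddLip K' g :=
  ⟨fun x => (hg.abs_le x).trans hK, fun x y => (hg.abs_sub_le x y).trans (by gcongr)⟩

theorem bddLip_of_abs_deriv_le {K : ℝ} {g : ℝ → ℝ} (hd : Differentiable ℝ g)
    (hg : ∀ x, |g x| ≤ K) (hg' : ∀ x, |deriv g x| ≤ K) : BddLip K g :=
  ⟨hg, fun x y => convex_univ.norm_image_sub_le_of_norm_deriv_le (fun z _ => hd z)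
    (fun z _ => hg' z) (mem_univ y) (mem_univ x)⟩

theorem exists_forall_abs_le {F : ℝ → ℝ → ℝ} (hF : Continuous fun p : ℝ × ℝ => F p.1 p.2)
    (hper : ∀ t, Function.Periodic (F t) 1) (s T : ℝ) :
    ∃ C, ∀ t ∈ Icc s T, ∀ x, |F t x| ≤ C := by
  obtain ⟨C, hC⟩ := (isCompact_image_of_periodic hF hper
    (isCompact_Icc (a := s) (b := T))).isBounded.exists_norm_le
  exact ⟨C, fun t ht x => hC _ (mem_image_of_mem _ (mk_mem_prod ht (mem_univ x)))⟩

namespace IsParabolicRegular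

variable {u w : ℝ → ℝ → ℝ} (hu : IsParabolicRegular u)
include hu

theorem exists_bddLip (s T : ℝ) :
    ∃ K, ∀ t ∈ Icc s T, BddLip K (u t) ∧ BddLip K (deriv (u t)) := by
  have hper := fun t => periodic_deriv (hu.periodic t)
  obtain ⟨C₀, h₀⟩ := exists_forall_abs_le hu.continuous_uncurry hu.periodic s T
  obtain ⟨C₁, h₁⟩ := exists_forall_abs_le hu.continuous_deriv hper s T
  obtain ⟨C₂, h₂⟩ := exists_forall_abs_le hu.continuous_deriv_deriv
    (fun t => periodic_deriv (hper t)) s T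
  exact ⟨max (max C₀ C₁) C₂, fun t ht =>
    ⟨(bddLip_of_abs_deriv_le (hu.differentiable t)
      (fun x => (h₀ t ht x).trans (le_max_left C₀ C₁))
      fun x => (h₁ t ht x).trans (le_max_right C₀ C₁)).mono (le_max_left _ _),
    bddLip_of_abs_deriv_le (hu.differentiable_deriv t)
      (fun x => (h₁ t ht x).trans ((le_max_right C₀ C₁).trans (le_max_left _ _)))
      fun x => (h₂ t ht x).trans (le_max_right _ _)⟩⟩

theorem deriv_sub (hw : IsParabolicRegular w) (t : ℝ) :
    deriv ((u - w) t) = deriv (u t) - deriv (w t) :=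
  funext fun x => _root_.deriv_sub (hu.differentiable t x) (hw.differentiable t x)

theorem deriv_deriv_sub (hw : IsParabolicRegular w) (t : ℝ) :
    deriv (deriv ((u - w) t)) = deriv (deriv (u t)) - deriv (deriv (w t)) := by
  rw [hu.deriv_sub hw]
  exact funext fun x => _root_.deriv_sub (hu.differentiable_deriv t x) (hw.differentiable_deriv t x)

theorem deriv_time_sub (hw : IsParabolicRegular w) (t x : ℝ) :
    deriv (fun s => (u - w) s x) t = deriv (fun s => u s x) t - deriv (fun s => w s x) t :=
  _root_.deriv_sub (hu.differentiableAt_time t x) (hw.differentiableAt_time t x)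

protected theorem sub (hw : IsParabolicRegular w) : IsParabolicRegular (u - w) where
  periodic t := (hu.periodic t).sub (hw.periodic t)
  differentiableAt_time t x := (hu.differentiableAt_time t x).sub (hw.differentiableAt_time t x)
  differentiable t := (hu.differentiable t).sub (hw.differentiable t)
  differentiable_deriv t := hu.deriv_sub hw t ▸
    (hu.differentiable_deriv t).sub (hw.differentiable_deriv t)
  continuous_uncurry := hu.continuous_uncurry.sub hw.continuous_uncurry
  continuous_deriv_time := by
    simp only [hu.deriv_time_sub hw]
    exact hu.continuous_deriv_time.sub hw.continuous_deriv_time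
  continuous_deriv := by
    simp only [hu.deriv_sub hw]
    exact hu.continuous_deriv.sub hw.continuous_deriv
  continuous_deriv_deriv := by
    simp only [hu.deriv_deriv_sub hw]
    exact hu.continuous_deriv_deriv.sub hw.continuous_deriv_deriv

end IsParabolicRegular

/-- The `1`-jet `(x, g x, g' x)` of `g` at `x`, the argument of the nonlinearity. -/
noncomputable def jet (g : ℝ → ℝ) (x : ℝ) : ℝ × ℝ × ℝ := (x, g x, deriv g x)

section Jet

variable {g g₁ g₂ : ℝ → ℝ} {K : ℝ}

theorem jet_add_one (hg : Function.Periodic g 1) (x : ℝ) : jet g (x + 1) = jet g x + (1, 0, 0) := by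
  simp only [jet, hg x, periodic_deriv hg x, Prod.mk_add_mk, add_zero]

theorem jet_mem (hg : BddLip K g) (hg' : BddLip K (deriv g)) (x : ℝ) :
    jet g x ∈ univ ×ˢ Metric.closedBall (0 : ℝ × ℝ) K :=
  ⟨mem_univ _, mem_closedBall_zero_iff.2 (max_le (hg.abs_le x) (hg'.abs_le x))⟩

theorem dist_jet_le (hg : BddLip K g) (hg' : BddLip K (deriv g)) (x y : ℝ) :
    dist (jet g x) (jet g y) ≤ max 1 K * |x - y| :=
  max_le (le_mul_of_one_le_left (abs_nonneg _) (le_max_left _ _)) <|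
    max_le ((hg.abs_sub_le x y).trans (by gcongr; exact le_max_right _ _))
      ((hg'.abs_sub_le x y).trans (by gcongr; exact le_max_right _ _))

variable {D : ℝ × ℝ × ℝ → ℝ × ℝ × ℝ →L[ℝ] ℝ} {e : ℝ × ℝ × ℝ}

theorem segmentAverage_jet_periodic (hD : Function.Periodic D (1, 0, 0))
    (h₁ : Function.Periodic g₁ 1) (h₂ : Function.Periodic g₂ 1) :
    Function.Periodic (fun x => segmentAverage D (jet g₁ x) (jet g₂ x) e) 1 := fun x => by
  have hshift : ∀ θ : ℝ, AffineMap.lineMap (jet g₂ x + (1, 0, 0)) (jet g₁ x + (1, 0, 0)) θ =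
      AffineMap.lineMap (jet g₂ x) (jet g₁ x) θ + (1, 0, 0) := fun θ => by
    simp only [AffineMap.lineMap_apply, vsub_eq_sub, vadd_eq_add, add_sub_add_right_eq_sub,
      add_assoc]
  simp only [jet_add_one h₁, jet_add_one h₂, segmentAverage, hshift, hD _]

theorem bddLip_segmentAverage_jet {C : ℝ} {L : NNReal} (hD : Continuous D)
    (hC : ∀ p ∈ univ ×ˢ Metric.closedBall (0 : ℝ × ℝ) K, ‖D p‖ ≤ C)
    (hL : LipschitzOnWith L D (univ ×ˢ Metric.closedBall (0 : ℝ × ℝ) K)) (he : ‖e‖ ≤ 1)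
    (h₁ : BddLip K g₁) (h₁' : BddLip K (deriv g₁)) (h₂ : BddLip K g₂) (h₂' : BddLip K (deriv g₂)) :
    BddLip (max C (L * max 1 K)) fun x => segmentAverage D (jet g₁ x) (jet g₂ x) e := by
  have hconv : Convex ℝ (univ ×ˢ Metric.closedBall (0 : ℝ × ℝ) K : Set (ℝ × ℝ × ℝ)) :=
    convex_univ.prod (convex_closedBall 0 K)
  refine ⟨fun x => ?_, fun x y => ?_⟩
  · calc |segmentAverage D (jet g₁ x) (jet g₂ x) e|
        ≤ ‖segmentAverage D (jet g₁ x) (jet g₂ x)‖ :=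
          (segmentAverage D (jet g₁ x) (jet g₂ x)).unit_le_opNorm e he
      _ ≤ C := norm_segmentAverage_le hconv hC (jet_mem h₁ h₁' x) (jet_mem h₂ h₂' x)
      _ ≤ _ := le_max_left _ _
  · calc |segmentAverage D (jet g₁ x) (jet g₂ x) e - segmentAverage D (jet g₁ y) (jet g₂ y) e|
        ≤ dist (segmentAverage D (jet g₁ x) (jet g₂ x))
            (segmentAverage D (jet g₁ y) (jet g₂ y)) := by
          rw [dist_eq_norm]
          exact (segmentAverage D (jet g₁ x) (jet g₂ x) -
            segmentAverage D (jet g₁ y) (jet g₂ y)).unit_le_opNorm e he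
      _ ≤ L * (max 1 K * |x - y|) :=
          dist_segmentAverage_le hD hconv hL (jet_mem h₁ h₁' x) (jet_mem h₂ h₂' x)
            (jet_mem h₁ h₁' y) (jet_mem h₂ h₂' y) (dist_jet_le h₁ h₁' x y)
            (dist_jet_le h₂ h₂' x y)
      _ ≤ max C (L * max 1 K) * |x - y| := by
          rw [← mul_assoc]
          gcongr
          exact le_max_right _ _

end Jet

namespace IsClassicalSolution

variable {f : ℝ → ℝ → ℝ → ℝ} {u w : ℝ → ℝ → ℝ}

theorem isParabolicRegular (hu : IsClassicalSolution f u) : IsParabolicRegular u := by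
  obtain ⟨hper, hcont, hdt, hdx, hdxx, hcontt, hcontx, hcontxx, -⟩ := hu
  exact ⟨hper, hdt, hdx, hdxx, hcont, hcontt, hcontx, hcontxx⟩

theorem deriv_time (hu : IsClassicalSolution f u) (t x : ℝ) :
    deriv (fun s => u s x) t = deriv (deriv (u t)) x + f x (u t x) (deriv (u t) x) := by
  obtain ⟨-, -, -, -, -, -, -, -, heq⟩ := hu
  exact heq t x

theorem comp_add_right (hu : IsClassicalSolution f u) (τ : ℝ) :
    IsClassicalSolution f fun t => u (t + τ) := by
  obtain ⟨hper, hcont, hdt, hdx, hdxx, hcontt, hcontx, hcontxx, heq⟩ := hu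
  have hshift : Continuous fun p : ℝ × ℝ => (p.1 + τ, p.2) := by fun_prop
  have hderiv : ∀ t x, deriv (fun s => u (s + τ) x) t = deriv (fun s => u s x) (t + τ) :=
    fun t x => deriv_comp_add_const (f := fun s => u s x) τ t
  refine ⟨fun t => hper _, hcont.comp hshift, fun t x => ?_, fun t => hdx _, fun t => hdxx _, ?_,
    hcontx.comp hshift, hcontxx.comp hshift, fun t x => (hderiv t x).trans (heq _ _)⟩
  · exact (hdt (t + τ) x).comp t (differentiableAt_id.add_const τ)
  · simp only [hderiv]
    exact hcontt.comp hshift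

theorem exists_isLinearSolution_sub
    (hf_reg : ContDiff ℝ 2 fun q : ℝ × ℝ × ℝ => f q.1 q.2.1 q.2.2)
    (hf_per : ∀ x w q : ℝ, f (x + 1) w q = f x w q) (hu : IsClassicalSolution f u)
    (hw : IsClassicalSolution f w) : ∃ b c, IsLinearSolution b c (u - w) := by
  set F := fun q : ℝ × ℝ × ℝ => f q.1 q.2.1 q.2.2
  have hD : ContDiff ℝ 1 (fderiv ℝ F) := hf_reg.fderiv_right (by norm_num)
  have hDper : Function.Periodic (fderiv ℝ F) (1, 0, 0) :=
    periodic_fderiv fun q => by simp only [F, Prod.fst_add, Prod.snd_add, add_zero, hf_per]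
  have hu' := hu.isParabolicRegular
  have hw' := hw.isParabolicRegular
  refine ⟨fun t x => segmentAverage (fderiv ℝ F) (jet (u t) x) (jet (w t) x) (0, 0, 1),
    fun t x => segmentAverage (fderiv ℝ F) (jet (u t) x) (jet (w t) x) (0, 1, 0),
    hu'.sub hw', fun t => segmentAverage_jet_periodic hDper (hu'.periodic t) (hw'.periodic t),
    fun t => segmentAverage_jet_periodic hDper (hu'.periodic t) (hw'.periodic t),
    fun s T => ?_, fun t x => ?_⟩
  · obtain ⟨K₁, hK₁⟩ := hu'.exists_bddLip s T
    obtain ⟨K₂, hK₂⟩ := hw'.exists_bddLip s T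
    have hball := isCompact_closedBall (0 : ℝ × ℝ) (max K₁ K₂)
    obtain ⟨C, hC⟩ := exists_forall_norm_le_of_periodic hD.continuous hDper hball
    obtain ⟨L, hL⟩ := exists_lipschitzOnWith_of_periodic hD hDper hball (convex_closedBall _ _)
    have hcoeff : ∀ e : ℝ × ℝ × ℝ, ‖e‖ ≤ 1 → ∀ t ∈ Icc s T, BddLip (max C (L * max 1 (max K₁ K₂)))
        fun x => segmentAverage (fderiv ℝ F) (jet (u t) x) (jet (w t) x) e := fun e he t ht =>
      bddLip_segmentAverage_jet hD.continuous hC hL he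
        ((hK₁ t ht).1.mono (le_max_left _ _)) ((hK₁ t ht).2.mono (le_max_left _ _))
        ((hK₂ t ht).1.mono (le_max_right _ _)) ((hK₂ t ht).2.mono (le_max_right _ _))
    exact ⟨_, fun t ht => ⟨hcoeff (0, 0, 1) (by simp) t ht, hcoeff (0, 1, 0) (by simp) t ht⟩⟩
  · have hadamard := sub_eq_segmentAverage_fderiv (hf_reg.of_le one_le_two) (jet (u t) x)
      (jet (w t) x)
    have hsplit : jet (u t) x - jet (w t) x =
        (deriv (u t) x - deriv (w t) x) • ((0, 0, 1) : ℝ × ℝ × ℝ) +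
          (u t x - w t x) • ((0, 1, 0) : ℝ × ℝ × ℝ) := by simp [jet]
    rw [hsplit, map_add, map_smul, map_smul, smul_eq_mul, smul_eq_mul] at hadamard
    rw [hu'.deriv_time_sub hw', hu'.deriv_deriv_sub hw', hu'.deriv_sub hw', hu.deriv_time,
      hw.deriv_time]
    simp only [Pi.sub_apply]
    simp only [F, jet] at hadamard ⊢
    linear_combination hadamard

end IsClassicalSolution

namespace IsEquilibrium

variable {f : ℝ → ℝ → ℝ → ℝ} {e e₁ e₂ : ℝ → ℝ}

theorem isClassicalSolution (he : IsEquilibrium f e) : IsClassicalSolution f fun _ => e := by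
  obtain ⟨hper, hreg, heq⟩ := he
  have hreg' : ContDiff ℝ 1 (deriv e) := hreg.deriv'
  refine ⟨fun _ => hper, hreg.continuous.comp continuous_snd, fun t x => differentiableAt_const _,
    fun _ => hreg.differentiable two_ne_zero, fun _ => hreg'.differentiable one_ne_zero, ?_,
    hreg'.continuous.comp continuous_snd, (hreg'.continuous_deriv le_rfl).comp continuous_snd,
    fun t x => ?_⟩
  · simpa only [deriv_const] using continuous_const
  · rw [deriv_const, heq]

theorem hasDerivAt_phase (he : IsEquilibrium f e) (x : ℝ) :
    HasDerivAt (fun y => (e y, deriv e y)) (deriv e x, -f x (e x) (deriv e x)) x := by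
  have hreg := he.isClassicalSolution.isParabolicRegular
  rw [← eq_neg_of_add_eq_zero_left (he.2.2 x)]
  exact (hreg.differentiable 0 x).hasDerivAt.prodMk (hreg.differentiable_deriv 0 x).hasDerivAt

theorem eq_of_eq_of_deriv_eq (hf_reg : ContDiff ℝ 1 fun q : ℝ × ℝ × ℝ => f q.1 q.2.1 q.2.2)
    (hf_per : ∀ x w q : ℝ, f (x + 1) w q = f x w q) (h₁ : IsEquilibrium f e₁)
    (h₂ : IsEquilibrium f e₂) {x₀ : ℝ} (h : e₁ x₀ = e₂ x₀) (h' : deriv e₁ x₀ = deriv e₂ x₀) :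
    e₁ = e₂ := by
  obtain ⟨K₁, hK₁⟩ := h₁.isClassicalSolution.isParabolicRegular.exists_bddLip 0 0
  obtain ⟨K₂, hK₂⟩ := h₂.isClassicalSolution.isParabolicRegular.exists_bddLip 0 0
  obtain ⟨hb₁, hb₁'⟩ := hK₁ 0 (left_mem_Icc.2 le_rfl)
  obtain ⟨hb₂, hb₂'⟩ := hK₂ 0 (left_mem_Icc.2 le_rfl)
  obtain ⟨L, hL⟩ := exists_lipschitzOnWith_of_periodic hf_reg
    (fun q => by simp only [Prod.fst_add, Prod.snd_add, add_zero, hf_per])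
    (isCompact_closedBall (0 : ℝ × ℝ) (max K₁ K₂)) (convex_closedBall _ _)
  have hfield : ∀ x, LipschitzOnWith (max 1 L) (fun p : ℝ × ℝ => (p.2, -f x p.1 p.2))
      (Metric.closedBall 0 (max K₁ K₂)) := fun x =>
    LipschitzWith.prod_snd.lipschitzOnWith.prodMk <| LipschitzOnWith.neg <|
      LipschitzOnWith.of_dist_le_mul fun p hp q hq => by
        simpa [Prod.dist_eq] using
          hL.dist_le_mul (x, p) (mk_mem_prod (mem_univ x) hp) (x, q) (mk_mem_prod (mem_univ x) hq)
  have hphase := ODE_solution_unique_univ (t₀ := x₀) hfield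
    (fun x => ⟨h₁.hasDerivAt_phase x,
      (jet_mem (hb₁.mono (le_max_left _ _)) (hb₁'.mono (le_max_left _ _)) x).2⟩)
    (fun x => ⟨h₂.hasDerivAt_phase x,
      (jet_mem (hb₂.mono (le_max_right _ _)) (hb₂'.mono (le_max_right _ _)) x).2⟩)
    (Prod.ext h h')
  exact funext fun x => congrArg Prod.fst (congrFun hphase x)

theorem hasSimpleZeros_sub (hf_reg : ContDiff ℝ 1 fun q : ℝ × ℝ × ℝ => f q.1 q.2.1 q.2.2)
    (hf_per : ∀ x w q : ℝ, f (x + 1) w q = f x w q) (h₁ : IsEquilibrium f e₁)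
    (h₂ : IsEquilibrium f e₂) (hne : e₁ ≠ e₂) : HasSimpleZeros (e₁ - e₂) := fun x hx hx' => by
  have hderiv := h₁.isClassicalSolution.isParabolicRegular.deriv_sub
    h₂.isClassicalSolution.isParabolicRegular 0
  exact hne (h₁.eq_of_eq_of_deriv_eq hf_reg hf_per h₂ (sub_eq_zero.1 hx)
    (sub_eq_zero.1 ((congrFun hderiv x).symm.trans hx')))

end IsEquilibrium

/-! ### Asymptotic expansions -/

/-- The expansion `u = w + r g + o(r)` in `C¹` along `l`, with a nowhere vanishing scale `r`. -/
structure HasC1Expansion (l : Filter ℝ) (u w : ℝ → ℝ → ℝ) (r : ℝ → ℝ) (g : ℝ → ℝ) : Prop where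
  scale_ne_zero : ∀ t, r t ≠ 0
  eventually_le : ∀ ε > 0, ∀ᶠ t in l, ∀ x, |u t x - w t x - r t * g x| ≤ ε * |r t| ∧
    |deriv (u t) x - deriv (w t) x - r t * deriv g x| ≤ ε * |r t|

/-- A `C¹` function on the circle with simple zeros only, used as the leading profile of an
expansion. -/
structure IsSimpleProfile (g : ℝ → ℝ) : Prop where
  hasSimpleZeros : HasSimpleZeros g
  contDiff : ContDiff ℝ 1 g
  periodic : Function.Periodic g 1

theorem IsSimpleProfile.zeroNumber_eq_ncard {g : ℝ → ℝ} (hg : IsSimpleProfile g) :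
    zeroNumber g = (circleZeros g).ncard :=
  hg.hasSimpleZeros.zeroNumber_eq_ncard hg.contDiff hg.periodic

theorem exists_pos_forall_abs_le_of_contDiff {g : ℝ → ℝ} (hreg : ContDiff ℝ 1 g)
    (hper : Function.Periodic g 1) : ∃ C > 0, ∀ x, |g x| ≤ C ∧ |deriv g x| ≤ C := by
  obtain ⟨C₀, h₀⟩ := exists_forall_abs_le (F := fun _ => g) (hreg.continuous.comp continuous_snd)
    (fun _ => hper) 0 0
  obtain ⟨C₁, h₁⟩ := exists_forall_abs_le (F := fun _ => deriv g)
    ((hreg.continuous_deriv le_rfl).comp continuous_snd) (fun _ => periodic_deriv hper) 0 0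
  have hmem : (0 : ℝ) ∈ Icc (0 : ℝ) 0 := left_mem_Icc.2 le_rfl
  exact ⟨max 1 (max C₀ C₁), by positivity, fun x =>
    ⟨(h₀ 0 hmem x).trans ((le_max_left _ _).trans (le_max_right _ _)),
      (h₁ 0 hmem x).trans ((le_max_right _ _).trans (le_max_right _ _))⟩⟩

namespace HasC1Expansion

variable {l : Filter ℝ} {u w : ℝ → ℝ → ℝ} {r g : ℝ → ℝ}

theorem eventually_abs_inv_mul_sub_le (h : HasC1Expansion l u w r g) (hu : IsParabolicRegular u)
    (hw : IsParabolicRegular w) {ε : ℝ} (hε : 0 < ε) :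
    ∀ᶠ t in l, ∀ x, |(r t)⁻¹ * (u - w) t x - g x| ≤ ε ∧
      |deriv (fun y => (r t)⁻¹ * (u - w) t y) x - deriv g x| ≤ ε := by
  filter_upwards [h.eventually_le ε hε] with t ht x
  have hr := h.scale_ne_zero t
  have hscale {a b : ℝ} (hab : |a - r t * b| ≤ ε * |r t|) : |(r t)⁻¹ * a - b| ≤ ε := by
    rwa [show (r t)⁻¹ * a - b = (a - r t * b) / r t by field_simp, abs_div,
      div_le_iff₀ (abs_pos.2 hr)]
  rw [deriv_const_mul_field, hu.deriv_sub hw]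
  exact ⟨hscale (ht x).1, hscale (ht x).2⟩

theorem eventually_hasSimpleZeros (h : HasC1Expansion l u w r g) (hu : IsParabolicRegular u)
    (hw : IsParabolicRegular w) (hg : IsSimpleProfile g) :
    ∀ᶠ t in l, HasSimpleZeros ((u - w) t) := by
  obtain ⟨ε, hε, hstable⟩ := hg.hasSimpleZeros.exists_pos_hasSimpleZeros hg.contDiff hg.periodic
  filter_upwards [h.eventually_abs_inv_mul_sub_le hu hw hε] with t ht x hx hx'
  refine hstable _ (fun x => (ht x).1) (fun x => (ht x).2) x (by simp only [hx, mul_zero]) ?_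
  rw [deriv_const_mul_field, hx', mul_zero]

theorem eventually_zeroNumber_eq (h : HasC1Expansion l u w r g) (hu : IsParabolicRegular u)
    (hw : IsParabolicRegular w) (hg : IsSimpleProfile g) :
    ∀ᶠ t in l, zeroNumber ((u - w) t) = zeroNumber g := by
  obtain ⟨ε, hε, hstable⟩ := hg.hasSimpleZeros.exists_pos_zeroNumber_eq hg.contDiff hg.periodic
  filter_upwards [h.eventually_abs_inv_mul_sub_le hu hw hε] with t ht
  rw [← zeroNumber_const_mul (inv_ne_zero (h.scale_ne_zero t))]
  exact hstable _ (((hu.sub hw).differentiable t).const_mul _)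
    (fun x => by simp only [(hu.sub hw).periodic t x]) (fun x => (ht x).1) fun x => (ht x).2

theorem of_tendsto_zero {e e' : ℝ → ℝ} (h : HasC1Expansion l u (fun _ => e) r g)
    (hr : Tendsto r l (𝓝 0)) (hreg : ContDiff ℝ 1 g) (hper : Function.Periodic g 1)
    (he : Differentiable ℝ e) (he' : Differentiable ℝ e') :
    HasC1Expansion l u (fun _ => e') (fun _ => 1) (e - e') := by
  refine ⟨fun _ => one_ne_zero, fun ε hε => ?_⟩
  obtain ⟨C, hC, hgC⟩ := exists_pos_forall_abs_le_of_contDiff hreg hper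
  have hsmall : ∀ᶠ t in l, |r t| < ε / (1 + C) := by
    simpa using hr.abs.eventually_lt_const (by rw [abs_zero]; positivity)
  filter_upwards [h.eventually_le 1 one_pos, hsmall] with t ht hrt x
  have hle : ∀ {a b : ℝ}, |a - r t * b| ≤ 1 * |r t| → |b| ≤ C → |a| ≤ ε * |(1 : ℝ)| :=
    fun {a b} hab hb =>
      calc |a| = |(a - r t * b) + r t * b| := by rw [sub_add_cancel]
        _ ≤ 1 * |r t| + |r t| * C := (abs_add_le _ _).trans (by rw [abs_mul]; gcongr)
        _ = |r t| * (1 + C) := by ring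
        _ ≤ ε := (le_div_iff₀ (by positivity)).1 hrt.le
        _ = ε * |(1 : ℝ)| := by rw [abs_one, mul_one]
  rw [deriv_sub (he x) (he' x), Pi.sub_apply, one_mul, one_mul, sub_sub_sub_cancel_right,
    sub_sub_sub_cancel_right]
  exact ⟨hle (ht x).1 (hgC x).1, hle (ht x).2 (hgC x).2⟩

theorem comp_add_right {e : ℝ → ℝ} {rate τ : ℝ}
    (h : HasC1Expansion l u (fun _ => e) (fun t => Real.exp (rate * t)) g) (hrate : rate ≠ 0)
    (hτ : τ ≠ 0) (hl : Tendsto (· + τ) l l) :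
    HasC1Expansion l (fun t => u (t + τ)) u
      (fun t => Real.exp (rate * t) * (Real.exp (rate * τ) - 1)) g := by
  have hne : Real.exp (rate * τ) - 1 ≠ 0 :=
    sub_ne_zero.2 fun h => mul_ne_zero hrate hτ ((Real.exp_eq_one_iff _).1 h)
  refine ⟨fun t => mul_ne_zero (Real.exp_ne_zero _) hne, fun ε hε => ?_⟩
  set E := Real.exp (rate * τ)
  have hE : 0 < E := Real.exp_pos _
  have hgap : 0 < |E - 1| := abs_pos.2 hne
  have hε' : 0 < ε * |E - 1| / (E + 1) := by positivity
  filter_upwards [h.eventually_le _ hε', hl.eventually (h.eventually_le _ hε')] with t ht ht' x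
  set R := Real.exp (rate * t)
  have hexp : Real.exp (rate * (t + τ)) = R * E := by rw [mul_add, Real.exp_add]
  have hR : 0 < R := Real.exp_pos _
  have htotal : ε * |E - 1| / (E + 1) * |R * E| + ε * |E - 1| / (E + 1) * |R| =
      ε * |R * (E - 1)| := by
    rw [abs_mul, abs_mul, abs_of_pos hR, abs_of_pos hE]
    field_simp
  have hle : ∀ {a a' b d : ℝ}, |a' - d - R * E * b| ≤ ε * |E - 1| / (E + 1) * |R * E| →
      |a - d - R * b| ≤ ε * |E - 1| / (E + 1) * |R| → |a' - a - R * (E - 1) * b| ≤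
        ε * |R * (E - 1)| := fun {a a' b d} ha' ha => by
    rw [← htotal, show a' - a - R * (E - 1) * b = (a' - d - R * E * b) - (a - d - R * b) by ring]
    exact (abs_sub _ _).trans (add_le_add ha' ha)
  rw [hexp] at ht'
  exact ⟨hle (ht' x).1 (ht x).1, hle (ht' x).2 (ht x).2⟩

end HasC1Expansion

theorem hasC1Expansion_exp {l : Filter ℝ} {u : ℝ → ℝ → ℝ} {e g : ℝ → ℝ} {rate : ℝ}
    (h : ∀ ε > 0, ∀ᶠ t in l, ∀ x,
      |u t x - e x - Real.exp (rate * t) * g x| ≤ ε * Real.exp (rate * t) ∧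
      |deriv (u t) x - deriv e x - Real.exp (rate * t) * deriv g x| ≤ ε * Real.exp (rate * t)) :
    HasC1Expansion l u (fun _ => e) (fun t => Real.exp (rate * t)) g :=
  ⟨fun _ => Real.exp_ne_zero _, by simpa only [Real.abs_exp] using h⟩

theorem IsEquilibrium.isSimpleProfile_sub {f : ℝ → ℝ → ℝ → ℝ} {e₁ e₂ : ℝ → ℝ}
    (hf_reg : ContDiff ℝ 1 fun q : ℝ × ℝ × ℝ => f q.1 q.2.1 q.2.2)
    (hf_per : ∀ x w q : ℝ, f (x + 1) w q = f x w q) (h₁ : IsEquilibrium f e₁)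
    (h₂ : IsEquilibrium f e₂) (hne : e₁ ≠ e₂) : IsSimpleProfile (e₁ - e₂) where
  hasSimpleZeros := h₁.hasSimpleZeros_sub hf_reg hf_per h₂ hne
  contDiff := (h₁.2.1.sub h₂.2.1).of_le one_le_two
  periodic := h₁.1.sub h₂.1

section ConnectingOrbit

variable {f : ℝ → ℝ → ℝ → ℝ} (hf_reg : ContDiff ℝ 2 fun q : ℝ × ℝ × ℝ => f q.1 q.2.1 q.2.2)
  (hf_per : ∀ x w q : ℝ, f (x + 1) w q = f x w q)
include hf_reg hf_per

namespace IsClassicalSolution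

variable {u w : ℝ → ℝ → ℝ} (hu : IsClassicalSolution f u) (hw : IsClassicalSolution f w)
  {r₁ r₂ g₁ g₂ : ℝ → ℝ} (h₁ : HasC1Expansion atBot u w r₁ g₁)
  (h₂ : HasC1Expansion atTop u w r₂ g₂) (hg₁ : IsSimpleProfile g₁) (hg₂ : IsSimpleProfile g₂)
include hu hw h₁ h₂ hg₁ hg₂

theorem zeroNumber_le_of_hasC1Expansion : zeroNumber g₂ ≤ zeroNumber g₁ := by
  obtain ⟨b, c, hv⟩ := hu.exists_isLinearSolution_sub hf_reg hf_per hw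
  have hu' := hu.isParabolicRegular
  have hw' := hw.isParabolicRegular
  obtain ⟨s, hs, hs₀⟩ := ((h₁.eventually_zeroNumber_eq hu' hw' hg₁).and
    (eventually_le_atBot 0)).exists
  obtain ⟨t, ht, ht₀⟩ := ((h₂.eventually_zeroNumber_eq hu' hw' hg₂).and
    (eventually_ge_atTop 0)).exists
  exact hs ▸ ht ▸ hv.zeroNumber_antitone (hs₀.trans ht₀)

theorem hasSimpleZeros_sub (hle : zeroNumber g₁ ≤ zeroNumber g₂) (t : ℝ) :
    HasSimpleZeros ((u - w) t) := by
  obtain ⟨b, c, hv⟩ := hu.exists_isLinearSolution_sub hf_reg hf_per hw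
  have hu' := hu.isParabolicRegular
  have hw' := hw.isParabolicRegular
  refine hv.hasSimpleZeros_of_eventually (m := (circleZeros g₁).ncard) ?_ ?_ t
  · filter_upwards [h₁.eventually_hasSimpleZeros hu' hw' hg₁,
      h₁.eventually_zeroNumber_eq hu' hw' hg₁] with t hs ht
    exact ⟨hs, (ht.trans hg₁.zeroNumber_eq_ncard).le⟩
  · filter_upwards [h₂.eventually_zeroNumber_eq hu' hw' hg₂] with t ht
    exact hg₁.zeroNumber_eq_ncard.ge.trans (hle.trans ht.ge)

end IsClassicalSolution

variable {u : ℝ → ℝ → ℝ} {em ep rm rp gm gp : ℝ → ℝ} (hu : IsClassicalSolution f u)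
  (hgm : IsSimpleProfile gm) (hgp : IsSimpleProfile gp) (heq : zeroNumber gm = zeroNumber gp)
include hu hgm hgp heq

theorem hasSimpleZeros_comp_add_right_sub {ratem ratep τ : ℝ}
    (hm : HasC1Expansion atBot u (fun _ => em) (fun t => Real.exp (ratem * t)) gm)
    (hp : HasC1Expansion atTop u (fun _ => ep) (fun t => Real.exp (ratep * t)) gp)
    (hratem : ratem ≠ 0) (hratep : ratep ≠ 0) (hτ : τ ≠ 0) (t : ℝ) :
    HasSimpleZeros (u (t + τ) - u t) :=
  (hu.comp_add_right τ).hasSimpleZeros_sub hf_reg hf_per hu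
    (hm.comp_add_right hratem hτ (tendsto_atBot_add_const_right _ _ tendsto_id))
    (hp.comp_add_right hratep hτ (tendsto_atTop_add_const_right _ _ tendsto_id)) hgm hgp heq.le t

theorem hasSimpleZeros_sub_equilibria (hem : IsEquilibrium f em) (hep : IsEquilibrium f ep)
    (hm : HasC1Expansion atBot u (fun _ => em) rm gm)
    (hp : HasC1Expansion atTop u (fun _ => ep) rp gp) (hrm : Tendsto rm atBot (𝓝 0))
    (hrp : Tendsto rp atTop (𝓝 0)) (t : ℝ) :
    HasSimpleZeros (u t - em) ∧ HasSimpleZeros (u t - ep) := by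
  have hem' := hem.isClassicalSolution
  have hep' := hep.isClassicalSolution
  rcases eq_or_ne em ep with rfl | hne
  · have hsimple := hu.hasSimpleZeros_sub hf_reg hf_per hem' hm hp hgm hgp heq.le t
    exact ⟨hsimple, hsimple⟩
  have hemd := hem'.isParabolicRegular.differentiable 0
  have hepd := hep'.isParabolicRegular.differentiable 0
  have hm' := hm.of_tendsto_zero hrm hgm.contDiff hgm.periodic hemd hepd
  have hp' := hp.of_tendsto_zero hrp hgp.contDiff hgp.periodic hepd hemd
  have hD := hem.isSimpleProfile_sub (hf_reg.of_le one_le_two) hf_per hep hne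
  have hD' := hep.isSimpleProfile_sub (hf_reg.of_le one_le_two) hf_per hem hne.symm
  have hsymm : zeroNumber (ep - em) = zeroNumber (em - ep) := by
    rw [← neg_sub]
    exact zeroNumber_neg _
  have hle : zeroNumber (em - ep) ≤ zeroNumber gm :=
    hsymm ▸ hu.zeroNumber_le_of_hasC1Expansion hf_reg hf_per hem' hm hp' hgm hD'
  have hge : zeroNumber gp ≤ zeroNumber (em - ep) :=
    hu.zeroNumber_le_of_hasC1Expansion hf_reg hf_per hep' hm' hp hD hgp
  exact ⟨hu.hasSimpleZeros_sub hf_reg hf_per hem' hm hp' hgm hD' (hsymm ▸ heq.trans_le hge) t,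
    hu.hasSimpleZeros_sub hf_reg hf_per hep' hm' hp hD hgp (hle.trans_eq heq) t⟩

end ConnectingOrbit

theorem HasSimpleZeros.not_tangent {g h : ℝ → ℝ} {x : ℝ} (hs : HasSimpleZeros (g - h))
    (hg : DifferentiableAt ℝ g x) (hh : DifferentiableAt ℝ h x) :
    ¬(g x = h x ∧ deriv g x = deriv h x) := fun ⟨heq, heq'⟩ =>
  hs x (sub_eq_zero.2 heq) ((deriv_sub hg hh).trans (sub_eq_zero.2 heq'))

/-- **One-to-one property of homoindexed connecting orbits.**
Let `u` be a bounded classical solution of `u_t = u_xx + f(x,u,u_x)` connecting two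
equilibria `em`, `ep`, with asymptotic expansions
`u(·,t) = em + e^{λ⁻t} φ⁻ + o(e^{λ⁻t})` in `C¹(S¹)` as `t → -∞` and
`u(·,t) = ep + e^{λ⁺t} φ⁺ + o(e^{λ⁺t})` in `C¹(S¹)` as `t → +∞`, where `λ⁻ > 0 > λ⁺`
and `φ⁻`, `φ⁺` are `C¹` functions having exactly `m` zeros (`m` even), all simple.
Then `(u(x,t),u_x(x,t))` never equals `(em(x),em'(x))` or `(ep(x),ep'(x))`, and the map
`(x,t) ↦ (x, u(x,t), u_x(x,t))` is one-to-one on `S¹ × ℝ`. -/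
theorem one_to_one_homoindexed_orbit
    (f : ℝ → ℝ → ℝ → ℝ)
    (hf_reg : ContDiff ℝ 2 (fun q : ℝ × ℝ × ℝ => f q.1 q.2.1 q.2.2))
    (hf_per : ∀ (x w q : ℝ), f (x + 1) w q = f x w q)
    (em ep : ℝ → ℝ) (hem : IsEquilibrium f em) (hep : IsEquilibrium f ep)
    (m : ℕ) (hm : Even m)
    (u : ℝ → ℝ → ℝ) (hu : IsClassicalSolution f u)
    (hu_bdd : ∃ C, ∀ t x : ℝ, |u t x| ≤ C)
    (lamm lamp : ℝ) (hlamm : 0 < lamm) (hlamp : lamp < 0)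
    (phim phip : ℝ → ℝ)
    (hphimreg : ContDiff ℝ 1 phim) (hphimper : Function.Periodic phim 1)
    (hphipreg : ContDiff ℝ 1 phip) (hphipper : Function.Periodic phip 1)
    (hphimzeros : HasExactlySimpleZeros phim m)
    (hphipzeros : HasExactlySimpleZeros phip m)
    -- ‖u(·,t) − em − e^{λ⁻ t} φ⁻‖_{C¹(S¹)} = o(e^{λ⁻ t}) as t → −∞
    (hasym_minus : ∀ ε > (0:ℝ), ∃ T : ℝ, ∀ t ≤ T, ∀ x : ℝ,
      |u t x - em x - Real.exp (lamm * t) * phim x| ≤ ε * Real.exp (lamm * t)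
      ∧ |deriv (u t) x - deriv em x - Real.exp (lamm * t) * deriv phim x|
          ≤ ε * Real.exp (lamm * t))
    -- ‖u(·,t) − ep − e^{λ⁺ t} φ⁺‖_{C¹(S¹)} = o(e^{λ⁺ t}) as t → +∞
    (hasym_plus : ∀ ε > (0:ℝ), ∃ T : ℝ, ∀ t ≥ T, ∀ x : ℝ,
      |u t x - ep x - Real.exp (lamp * t) * phip x| ≤ ε * Real.exp (lamp * t)
      ∧ |deriv (u t) x - deriv ep x - Real.exp (lamp * t) * deriv phip x|
          ≤ ε * Real.exp (lamp * t)) :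
    (∀ t x : ℝ, ¬ (u t x = em x ∧ deriv (u t) x = deriv em x))
    ∧ (∀ t x : ℝ, ¬ (u t x = ep x ∧ deriv (u t) x = deriv ep x))
    ∧ (∀ (x t₁ t₂ : ℝ), u t₁ x = u t₂ x → deriv (u t₁) x = deriv (u t₂) x → t₁ = t₂) := by
  have hgm : IsSimpleProfile phim := ⟨hphimzeros.1, hphimreg, hphimper⟩
  have hgp : IsSimpleProfile phip := ⟨hphipzeros.1, hphipreg, hphipper⟩
  have heq : zeroNumber phim = zeroNumber phip :=
    hgm.zeroNumber_eq_ncard.trans <|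
      (congrArg Nat.cast (hphimzeros.2.trans hphipzeros.2.symm)).trans hgp.zeroNumber_eq_ncard.symm
  have hminus := hasC1Expansion_exp fun ε hε => eventually_atBot.2 (hasym_minus ε hε)
  have hplus := hasC1Expansion_exp fun ε hε => eventually_atTop.2 (hasym_plus ε hε)
  have hdecay_minus := Real.tendsto_exp_atBot.comp (tendsto_id.const_mul_atBot hlamm)
  have hdecay_plus := Real.tendsto_exp_atBot.comp (tendsto_id.const_mul_atTop_of_neg hlamp)
  have hsimple := hasSimpleZeros_sub_equilibria hf_reg hf_per hu hgm hgp heq hem hep hminus hplus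
    hdecay_minus hdecay_plus
  have hu_diff := hu.isParabolicRegular.differentiable
  have hem_diff := hem.isClassicalSolution.isParabolicRegular.differentiable 0
  have hep_diff := hep.isClassicalSolution.isParabolicRegular.differentiable 0
  refine ⟨fun t x => (hsimple t).1.not_tangent (hu_diff t x) (hem_diff x),
    fun t x => (hsimple t).2.not_tangent (hu_diff t x) (hep_diff x), fun x t₁ t₂ h h' => ?_⟩
  by_contra hne
  have hshift := hasSimpleZeros_comp_add_right_sub hf_reg hf_per hu hgm hgp heq hminus hplus
    hlamm.ne' hlamp.ne (sub_ne_zero.2 (Ne.symm hne)) t₁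
  rw [add_sub_cancel] at hshift
  exact hshift.not_tangent (hu_diff t₂ x) (hu_diff t₁ x) ⟨h.symm, h'.symm⟩
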